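/- arXiv:2311.04561 — 5 statements merged into one kernel-verified Lean document; each statement's English description precedes it below -/
import Mathlib

section
/- Suppose 0 ≤ ℓ(w, s i) ≤ B for all w ∈ 𝒲 and all i, and suppose the joint law P_{W,Z} of (W,Z) is absolutely continuous with respect to the product P_W ⊗ P_Z of its marginals. Then |E_{(W,Z)}[R_test(W,Z) − R_train(W,Z)]| ≤ sqrt( B² · C_{m,u} · I(W;Z) · (m+u) / (2·m·u) ). -/
/-!
For a fixed parameter `w`, the gap `R_test - R_train` is, up to sign, `(1/m + 1/u)` times the centred
sum of the losses on the smaller part, drawn without replacement. Revealing these draws one by one and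
applying Hoeffding's lemma to each conditional mean increment shows that the gap is sub-Gaussian
under a uniformly random permutation, with variance proxy `v = B² C_{m,u} (m+u) / (4 m u)`
(`sum_perm_exp_le`, `sum_sq_le`, `sum_perm_exp_gap_le`).

Integrating over `w` gives the same bound under the product law `Q = P_W ⊗ P_Z`. The
Donsker–Varadhan inequality (`integral_le_llr_add_log`) transfers it to the joint law `P`:
`t E[gap] ≤ I(W;Z) + t² v / 2` for all real `t`, and `t = E[gap] / v` yields the claim. The
log-likelihood ratio is integrable because `P ≤ n! • Q` (`integrable_llr_of_le`), so that `mutInfo`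
is a genuine integral.
-/

open MeasureTheory ProbabilityTheory Real

noncomputable section

/-- The constant `C_{m,u} = 2(m+u)·max(m,u)/((m+u−1/2)·(2·max(m,u)−1))`. -/
def Cmu (m u : ℕ) : ℝ :=
  2 * ((m : ℝ) + u) * max (m : ℝ) u / ((((m : ℝ) + u) - 1/2) * (2 * max (m : ℝ) u - 1))

/-- Transductive training error: average loss over the first `m` indices of the
sampling sequence `z`. -/
def Rtrain {S W : Type*} (m u : ℕ) (s : Fin (m + u) → S) (ℓ : W → S → ℝ)
    (w : W) (z : Fin (m + u) → Fin (m + u)) : ℝ :=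
  (∑ i : Fin (m + u), if (i : ℕ) < m then ℓ w (s (z i)) else 0) / m

/-- Transductive test error: average loss over the last `u` indices of the
sampling sequence `z`. -/
def Rtest {S W : Type*} (m u : ℕ) (s : Fin (m + u) → S) (ℓ : W → S → ℝ)
    (w : W) (z : Fin (m + u) → Fin (m + u)) : ℝ :=
  (∑ i : Fin (m + u), if m ≤ (i : ℕ) then ℓ w (s (z i)) else 0) / u

instance (n : ℕ) : MeasurableSpace (Equiv.Perm (Fin n)) := ⊤

/-- The uniform distribution on the symmetric group of `Fin n` (sampling without
replacement). -/
def uniformPerm (n : ℕ) : Measure (Equiv.Perm (Fin n)) :=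
  letI : Nonempty (Equiv.Perm (Fin n)) := ⟨1⟩
  (PMF.uniformOfFintype (Equiv.Perm (Fin n))).toMeasure

/-- Kullback–Leibler divergence `D_KL(μ ‖ ν) = ∫ log(dμ/dν) dμ`. -/
def klDivR {α : Type*} [MeasurableSpace α] (μ ν : Measure α) : ℝ :=
  ∫ x, llr μ ν x ∂μ

/-- Mutual information `I(X;Y) = D_KL(P_{X,Y} ‖ P_X ⊗ P_Y)`. -/
def mutInfo {Ω α β : Type*} [MeasurableSpace Ω] [MeasurableSpace α] [MeasurableSpace β]
    (μ : Measure Ω) (X : Ω → α) (Y : Ω → β) : ℝ :=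
  klDivR (Measure.map (fun ω => (X ω, Y ω)) μ) ((Measure.map X μ).prod (Measure.map Y μ))

/-- **Hoeffding's lemma** for a uniformly random element of `Fin (n + 1)`, as a finite sum. -/
lemma sum_exp_centered_le (n : ℕ) (B : ℝ) (a : Fin (n + 1) → ℝ)
    (ha : ∀ i, 0 ≤ a i ∧ a i ≤ B) (t : ℝ) :
    ∑ j, exp (t * (a j - (∑ i, a i) / (n + 1))) ≤ (n + 1) * exp (t ^ 2 * B ^ 2 / 8) := by
  have h := (hasSubgaussianMGF_of_mem_Icc (X := a) (a := 0) (b := B)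
    (μ := (PMF.uniformOfFintype (Fin (n + 1))).toMeasure) (measurable_of_finite a).aemeasurable
    (.of_forall fun i => ha i)).mgf_le t
  rw [mgf, PMF.integral_eq_sum, PMF.integral_eq_sum] at h
  simp only [PMF.uniformOfFintype_apply, Fintype.card_fin, smul_eq_mul, ← Finset.mul_sum,
    ENNReal.toReal_inv, ENNReal.toReal_natCast] at h
  push_cast at h
  have hn : (0 : ℝ) < n + 1 := by positivity
  rw [inv_mul_le_iff₀ hn] at h
  have e : (‖B - 0‖ / 2) ^ 2 * t ^ 2 / 2 = t ^ 2 * B ^ 2 / 8 := by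
    rw [Real.norm_eq_abs, div_pow, sq_abs]; ring
  rw [e] at h
  simpa only [div_eq_inv_mul] using h

/-- Moment generating function of the sum of the first `m` of `n = m + u` values drawn without
replacement, centred at its mean. Revealing the first draw `j` leaves a uniformly random
permutation of the other `n - 1` values, and changes the conditional mean of the sum by
`u / (n - 1) * (a j - mean)`, to which Hoeffding's lemma applies. -/
lemma sum_perm_exp_le (u : ℕ) (hu : 1 ≤ u) (B t : ℝ) (m : ℕ) :
    ∀ (n : ℕ), n = m + u → ∀ a : Fin n → ℝ, (∀ i, 0 ≤ a i ∧ a i ≤ B) →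
    ∑ z : Equiv.Perm (Fin n),
      exp (t * ((∑ i : Fin n, if (i : ℕ) < m then a (z i) else 0) - m * ((∑ i, a i) / n)))
      ≤ n.factorial * exp (t ^ 2 * B ^ 2 / 8 * ∑ j ∈ Finset.range m, ((u : ℝ) / (u + j)) ^ 2) := by
  induction m with
  | zero => intro n _ a _; simp [Finset.card_univ, Fintype.card_perm]
  | succ m ih =>
    intro n' hn' a ha
    obtain ⟨n, rfl⟩ : ∃ n, n' = n + 1 := ⟨m + u, by omega⟩
    have hn : n = m + u := by omega
    have hnR : (n : ℝ) = m + u := by exact_mod_cast hn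
    have huR : (1 : ℝ) ≤ u := by exact_mod_cast hu
    have hmR : (0 : ℝ) ≤ m := by positivity
    have hn0 : (n : ℝ) ≠ 0 := by rw [hnR]; positivity
    have hn1 : (n : ℝ) + 1 ≠ 0 := by positivity
    set A := ∑ i, a i with hA
    rw [← Equiv.sum_comp Equiv.Perm.decomposeFin.symm, Fintype.sum_prod_type]
    set K := exp (t ^ 2 * B ^ 2 / 8 * ∑ j ∈ Finset.range m, ((u : ℝ) / (u + j)) ^ 2) with hK
    have key : ∀ p : Fin (n + 1), ∑ e : Equiv.Perm (Fin n),
        exp (t * ((∑ i : Fin (n + 1), if (i : ℕ) < m + 1 then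
          a (Equiv.Perm.decomposeFin.symm (p, e) i) else 0) - (m + 1 : ℕ) * (A / (n + 1 : ℕ))))
        ≤ exp ((t * (u / n)) * (a p - A / (n + 1))) * (n.factorial * K) := by
      intro p
      set b : Fin n → ℝ := fun x => a (Equiv.swap 0 p x.succ) with hb
      have hbsum : ∑ x, b x = A - a p := by
        have : ∑ i, a (Equiv.swap 0 p i) = A := Equiv.sum_comp (Equiv.swap 0 p) a
        rw [Fin.sum_univ_succ, Equiv.swap_apply_left] at this
        rw [← this]; ring
      have h := ih n hn b (fun i => ha _)
      refine le_trans (le_of_eq ?_) (mul_le_mul_of_nonneg_left h (exp_pos _).le)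
      rw [Finset.mul_sum]
      refine Finset.sum_congr rfl fun e _ => ?_
      rw [← exp_add]
      congr 1
      rw [Fin.sum_univ_succ]
      simp only [Equiv.Perm.decomposeFin_symm_apply_zero,
        Equiv.Perm.decomposeFin_symm_apply_succ, Fin.val_zero, Fin.val_succ,
        Nat.succ_pos, if_true, add_lt_add_iff_right]
      rw [hbsum]
      have hu' : (u : ℝ) = n - m := by rw [hnR]; ring
      rw [hu']
      push_cast
      field_simp
      ring
    refine (Finset.sum_le_sum fun p _ => key p).trans ?_
    rw [← Finset.sum_mul]
    refine (mul_le_mul_of_nonneg_right (sum_exp_centered_le n B a ha (t * (u / n)))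
      (by positivity)).trans (le_of_eq ?_)
    rw [Finset.sum_range_succ, mul_add, exp_add, Nat.factorial_succ, hnR, ← hK]
    push_cast
    rw [hnR, show (t * ((u : ℝ) / (m + u))) ^ 2 * B ^ 2 / 8
      = t ^ 2 * B ^ 2 / 8 * ((u : ℝ) / (u + m)) ^ 2 by rw [add_comm (m : ℝ)]; ring]
    ring

/-- Telescoping bound based on `1 / j ^ 2 ≤ 1 / (j - 1/2) - 1 / (j + 1/2)`. -/
lemma sum_sq_le (u : ℕ) (hu : 1 ≤ u) (m : ℕ) :
    ∑ j ∈ Finset.range m, ((u : ℝ) / (u + j)) ^ 2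
      ≤ u ^ 2 * m / ((u - 1 / 2) * (u + m - 1 / 2)) := by
  have huR : (1 : ℝ) ≤ u := by exact_mod_cast hu
  have h1 : (0 : ℝ) < u - 1 / 2 := by linarith
  induction m with
  | zero => simp
  | succ m ih =>
    have hmR : (0 : ℝ) ≤ m := by positivity
    have h2 : (0 : ℝ) < u + m - 1 / 2 := by linarith
    have h3 : (0 : ℝ) < u + m + 1 / 2 := by linarith
    have h4 : (0 : ℝ) < u + m := by linarith
    rw [Finset.sum_range_succ]
    refine (add_le_add_left ih _).trans ?_
    have e : (u : ℝ) ^ 2 * ((m + 1 : ℕ) : ℝ) / ((u - 1 / 2) * (u + ((m + 1 : ℕ) : ℝ) - 1 / 2))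
        = u ^ 2 * m / ((u - 1 / 2) * (u + m - 1 / 2))
          + u ^ 2 / ((u + m - 1 / 2) * (u + m + 1 / 2)) := by
      push_cast
      rw [show (u : ℝ) + (m + 1) - 1 / 2 = u + m + 1 / 2 by ring]
      rw [div_add_div _ _ (by positivity) (by positivity),
        div_eq_div_iff (by positivity) (by positivity)]
      ring
    rw [e, div_pow]
    gcongr
    nlinarith

lemma Cmu_eq_of_le {m u : ℕ} (h : m ≤ u) :
    Cmu m u = 2 * ((m : ℝ) + u) * u / ((m + u - 1 / 2) * (2 * u - 1)) := by
  rw [Cmu, max_eq_right (by exact_mod_cast h)]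

lemma Cmu_comm (m u : ℕ) : Cmu m u = Cmu u m := by
  rw [Cmu, Cmu, max_comm, add_comm (m : ℝ)]

/-- `sum_perm_exp_le` rescaled to the deviation `(1/m + 1/u) * (sum - mean)`, when the number `m`
of revealed draws is at most `u`. -/
lemma sum_perm_exp_le_Cmu {m u n : ℕ} (hm : 1 ≤ m) (hmu : m ≤ u) (hn : n = m + u) (B t : ℝ)
    (a : Fin n → ℝ) (ha : ∀ i, 0 ≤ a i ∧ a i ≤ B) :
    ∑ z : Equiv.Perm (Fin n),
      exp (t * ((1 / m + 1 / u) *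
        ((∑ i : Fin n, if (i : ℕ) < m then a (z i) else 0) - m * ((∑ i, a i) / n))))
      ≤ n.factorial * exp (t ^ 2 * (B ^ 2 * Cmu m u * (m + u) / (4 * m * u)) / 2) := by
  have huR : (1 : ℝ) ≤ u := by exact_mod_cast hm.trans hmu
  have hmR : (1 : ℝ) ≤ m := by exact_mod_cast hm
  have h := sum_perm_exp_le u (hm.trans hmu) B (t * (1 / m + 1 / u)) m n hn a ha
  simp only [mul_assoc t] at h
  refine h.trans ?_
  gcongr
  have h2 : (0 : ℝ) < m + u - 1 / 2 := by linarith
  have h3 : (0 : ℝ) < 2 * u - 1 := by linarith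
  have h4 : (0 : ℝ) < u - 1 / 2 := by linarith
  refine (mul_le_mul_of_nonneg_left (sum_sq_le u (hm.trans hmu) m) (by positivity)).trans
    (le_of_eq ?_)
  rw [Cmu_eq_of_le hmu, show (u : ℝ) + m - 1 / 2 = m + u - 1 / 2 by ring,
    show (2 * u - 1 : ℝ) = 2 * (u - 1 / 2) by ring]
  field_simp
  ring

/-- The gap between test and training error is sub-Gaussian under a uniformly random permutation,
for every fixed parameter. The smaller of the two parts is the one whose draws are revealed; if it
is the test part, the permutation is precomposed with the reversal of `Fin n`. -/
lemma sum_perm_exp_gap_le {S 𝒲 : Type*} (m u : ℕ) (hm : 1 ≤ m) (hu : 1 ≤ u)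
    (s : Fin (m + u) → S) (B : ℝ) (ℓ : 𝒲 → S → ℝ)
    (hℓ : ∀ (w : 𝒲) (i : Fin (m + u)), 0 ≤ ℓ w (s i) ∧ ℓ w (s i) ≤ B) (w : 𝒲) (t : ℝ) :
    ∑ z : Equiv.Perm (Fin (m + u)), exp (t * (Rtest m u s ℓ w z - Rtrain m u s ℓ w z))
      ≤ (m + u).factorial * exp (t ^ 2 * (B ^ 2 * Cmu m u * (m + u) / (4 * m * u)) / 2) := by
  have hm0 : (m : ℝ) ≠ 0 := by positivity
  have hu0 : (u : ℝ) ≠ 0 := by positivity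
  have hmu0 : (m : ℝ) + u ≠ 0 := by positivity
  set a : Fin (m + u) → ℝ := fun i => ℓ w (s i) with ha
  have hsplit : ∀ z : Equiv.Perm (Fin (m + u)),
      (∑ i : Fin (m + u), if (i : ℕ) < m then a (z i) else 0)
        + (∑ i : Fin (m + u), if m ≤ (i : ℕ) then a (z i) else 0) = ∑ i, a i := by
    intro z
    rw [← Finset.sum_add_distrib, ← Equiv.sum_comp z a]
    refine Finset.sum_congr rfl fun i _ => ?_
    by_cases h : (i : ℕ) < m
    · simp [h]
    · simp [h, not_lt.mp h]
  rcases le_total m u with hmu | hmu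
  · have h := sum_perm_exp_le_Cmu hm hmu rfl B (-t) a (fun i => hℓ w i)
    rw [neg_sq] at h
    refine le_trans (le_of_eq (Finset.sum_congr rfl fun z _ => ?_)) h
    congr 1
    have h1 := hsplit z
    rw [Rtest, Rtrain, ← h1]
    push_cast
    field_simp
    ring
  · have h := sum_perm_exp_le_Cmu hu hmu (add_comm m u) B t a (fun i => hℓ w i)
    rw [show B ^ 2 * Cmu u m * (u + m) / (4 * u * m)
      = B ^ 2 * Cmu m u * (m + u) / (4 * m * u) by rw [Cmu_comm]; ring] at h
    refine le_trans (le_of_eq ?_) h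
    rw [← Equiv.sum_comp (Equiv.mulRight (Fin.revPerm : Equiv.Perm (Fin (m + u))))]
    refine Finset.sum_congr rfl fun z _ => ?_
    congr 1
    have hrev : (∑ i : Fin (m + u), if m ≤ (i : ℕ) then
        a ((Equiv.mulRight (Fin.revPerm : Equiv.Perm (Fin (m + u)))) z i) else 0)
        = ∑ i : Fin (m + u), if (i : ℕ) < u then a (z i) else 0 := by
      rw [← Equiv.sum_comp Fin.revPerm]
      refine Finset.sum_congr rfl fun i _ => ?_
      have hi := i.isLt
      simp only [Equiv.coe_mulRight, Equiv.Perm.coe_mul, Function.comp_apply,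
        Fin.revPerm_apply, Fin.rev_rev, Fin.val_rev]
      congr 1
      apply propext
      omega
    have h1 := hsplit (Equiv.mulRight (Fin.revPerm : Equiv.Perm (Fin (m + u))) z)
    rw [hrev] at h1
    rw [Rtest, Rtrain, hrev, ← h1]
    push_cast
    field_simp
    ring

instance (n : ℕ) : DiscreteMeasurableSpace (Equiv.Perm (Fin n)) := ⟨fun _ => trivial⟩

instance (n : ℕ) : IsProbabilityMeasure (uniformPerm n) := by
  unfold uniformPerm; infer_instance

lemma uniformPerm_singleton (n : ℕ) (z : Equiv.Perm (Fin n)) :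
    uniformPerm n {z} = (n.factorial : ENNReal)⁻¹ := by
  rw [uniformPerm, PMF.toMeasure_apply_singleton _ _ (measurableSet_singleton z)]
  simp [Fintype.card_perm]

lemma integral_uniformPerm (n : ℕ) (f : Equiv.Perm (Fin n) → ℝ) :
    ∫ z, f z ∂(uniformPerm n) = (n.factorial : ℝ)⁻¹ * ∑ z, f z := by
  rw [integral_fintype .of_finite, Finset.mul_sum]
  simp [measureReal_def, uniformPerm_singleton]

/-- If `P ≤ N • Q`, the density `dP/dQ` is bounded, hence so is `r log r`, and the log-likelihood
ratio is integrable. -/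
lemma integrable_llr_of_le {α : Type*} [MeasurableSpace α] (P Q : Measure α)
    [IsProbabilityMeasure P] [IsProbabilityMeasure Q] (N : ℕ)
    (h : ∀ A, MeasurableSet A → P A ≤ N * Q A) (hac : P ≪ Q) :
    Integrable (llr P Q) P := by
  rw [← integrable_rnDeriv_mul_log_iff hac]
  have hle : P.rnDeriv Q ≤ᵐ[Q] fun _ => (N : ENNReal) := by
    refine ae_le_of_forall_setLIntegral_le_of_sigmaFinite (P.measurable_rnDeriv Q) ?_
    intro A hA _
    rw [lintegral_const, Measure.restrict_apply_univ]
    exact (Measure.setLIntegral_rnDeriv_le A).trans (h A hA)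
  obtain ⟨C, hC⟩ := (isCompact_Icc (a := (0 : ℝ)) (b := N)).exists_bound_of_continuousOn
    (f := fun x => x * log x) Real.continuous_mul_log.continuousOn
  refine Integrable.of_bound (C := C) ?_ ?_
  · have := (P.measurable_rnDeriv Q).ennreal_toReal
    exact (this.mul (Real.measurable_log.comp this)).aestronglyMeasurable
  · filter_upwards [hle] with x hx
    refine hC _ ⟨ENNReal.toReal_nonneg, ?_⟩
    simpa using ENNReal.toReal_mono (ENNReal.natCast_ne_top N) hx

/-- One half of the **Donsker–Varadhan** variational formula: it is Gibbs' inequality for `P`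
relative to the exponential tilting of `Q` by `f`. -/
lemma integral_le_llr_add_log {α : Type*} [MeasurableSpace α] (P Q : Measure α)
    [IsProbabilityMeasure P] [IsProbabilityMeasure Q] (hac : P ≪ Q)
    (hllr : Integrable (llr P Q) P) (f : α → ℝ) (hfP : Integrable f P)
    (hfQ : Integrable (fun x => exp (f x)) Q) :
    ∫ x, f x ∂P ≤ ∫ x, llr P Q x ∂P + log (∫ x, exp (f x) ∂Q) := by
  have := isProbabilityMeasure_tilted hfQ
  have hac' : P ≪ Q.tilted f := hac.trans (absolutelyContinuous_tilted hfQ)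
  have h := InformationTheory.integral_llr_add_sub_measure_univ_nonneg hac'
    (integrable_llr_tilted_right hac hfP hllr hfQ)
  rw [integral_llr_tilted_right hac hfP hfQ hllr] at h
  simp only [probReal_univ] at h
  linarith

theorem statement0 {Ω S 𝒲 : Type*} [MeasurableSpace Ω] [MeasurableSpace S] [MeasurableSpace 𝒲]
    (m u : ℕ) (hm : 1 ≤ m) (hu : 1 ≤ u)
    (s : Fin (m + u) → S) (B : ℝ) (hB : 0 < B)
    (ℓ : 𝒲 → S → ℝ) (hℓmeas : Measurable fun p : 𝒲 × S => ℓ p.1 p.2)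
    (hℓ : ∀ (w : 𝒲) (i : Fin (m + u)), 0 ≤ ℓ w (s i) ∧ ℓ w (s i) ≤ B)
    (μ : Measure Ω) [IsProbabilityMeasure μ]
    (W : Ω → 𝒲) (Z : Ω → Equiv.Perm (Fin (m + u)))
    (hW : Measurable W) (hZ : Measurable Z)
    (hZunif : Measure.map Z μ = uniformPerm (m + u))
    (hac : Measure.map (fun ω => (W ω, Z ω)) μ ≪ (Measure.map W μ).prod (Measure.map Z μ)) :
    |∫ ω, (Rtest m u s ℓ (W ω) (Z ω) - Rtrain m u s ℓ (W ω) (Z ω)) ∂μ|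
      ≤ Real.sqrt (B ^ 2 * Cmu m u * mutInfo μ W Z * ((m : ℝ) + u) / (2 * m * u)) := by
  set Q := (Measure.map W μ).prod (Measure.map Z μ) with hQ
  set P := Measure.map (fun ω => (W ω, Z ω)) μ with hP
  have hWZ : Measurable fun ω => (W ω, Z ω) := hW.prodMk hZ
  have : IsProbabilityMeasure (Measure.map W μ) := Measure.isProbabilityMeasure_map hW.aemeasurable
  have : IsProbabilityMeasure (Measure.map Z μ) := Measure.isProbabilityMeasure_map hZ.aemeasurable
  have : IsProbabilityMeasure P := Measure.isProbabilityMeasure_map hWZ.aemeasurable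
  have hmR : (1 : ℝ) ≤ m := by exact_mod_cast hm
  have huR : (1 : ℝ) ≤ u := by exact_mod_cast hu
  have hmaxR : (1 : ℝ) ≤ max (m : ℝ) u := le_max_of_le_left hmR
  have hCpos : 0 < Cmu m u := by
    have h2 : (0 : ℝ) < m + u - 1 / 2 := by linarith
    have h3 : (0 : ℝ) < 2 * max (m : ℝ) u - 1 := by linarith
    unfold Cmu
    positivity
  set v : ℝ := B ^ 2 * Cmu m u * (m + u) / (4 * m * u) with hv
  have hvpos : 0 < v := by positivity
  -- Each fibre over `z` has `Q`-mass `1 / n!` times its `P_W`-mass, so `P ≤ n! • Q`.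
  have hPQ : ∀ A, MeasurableSet A → P A ≤ ((m + u).factorial : ℕ) * Q A := by
    intro A hA
    rw [hQ, Measure.prod_apply_symm hA, lintegral_fintype, hZunif, hP,
      Measure.map_apply hWZ hA, Finset.mul_sum]
    have hcov : (fun ω => (W ω, Z ω)) ⁻¹' A
        ⊆ ⋃ z : Equiv.Perm (Fin (m + u)), W ⁻¹' ((fun w => (w, z)) ⁻¹' A) := by
      intro ω hω
      exact Set.mem_iUnion.2 ⟨Z ω, hω⟩
    refine (measure_mono hcov).trans ((measure_iUnion_fintype_le μ _).trans (le_of_eq ?_))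
    refine Finset.sum_congr rfl fun z _ => ?_
    rw [uniformPerm_singleton, Measure.map_apply hW (measurable_prodMk_right hA), mul_left_comm,
      ENNReal.mul_inv_cancel (by exact_mod_cast (m + u).factorial_ne_zero)
        (ENNReal.natCast_ne_top _), mul_one]
  have hllr := integrable_llr_of_le P Q _ hPQ hac
  set F : 𝒲 × Equiv.Perm (Fin (m + u)) → ℝ :=
    fun p => Rtest m u s ℓ p.1 p.2 - Rtrain m u s ℓ p.1 p.2 with hF
  have hFmeas : Measurable F := by
    refine measurable_from_prod_countable_left fun z => ?_
    have hl : ∀ i, Measurable fun w => ℓ w (s (z i)) := fun i =>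
      hℓmeas.comp (measurable_id.prodMk measurable_const)
    simp only [hF, Rtest, Rtrain]
    refine Measurable.sub (Measurable.div_const (Finset.measurable_sum _ fun i _ => ?_) _)
      (Measurable.div_const (Finset.measurable_sum _ fun i _ => ?_) _)
    · split_ifs
      exacts [hl i, measurable_const]
    · split_ifs
      exacts [hl i, measurable_const]
  have hFbound : ∃ C, ∀ p, |F p| ≤ C := by
    refine ⟨(∑ _i : Fin (m + u), B) / u + (∑ _i : Fin (m + u), B) / m, fun p => ?_⟩
    refine (abs_sub _ _).trans (add_le_add ?_ ?_)
    · rw [Rtest, abs_div, Nat.abs_cast]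
      gcongr
      refine (Finset.abs_sum_le_sum_abs _ _).trans (Finset.sum_le_sum fun i _ => ?_)
      split_ifs
      · rw [abs_of_nonneg (hℓ _ _).1]; exact (hℓ _ _).2
      · simpa using hB.le
    · rw [Rtrain, abs_div, Nat.abs_cast]
      gcongr
      refine (Finset.abs_sum_le_sum_abs _ _).trans (Finset.sum_le_sum fun i _ => ?_)
      split_ifs
      · rw [abs_of_nonneg (hℓ _ _).1]; exact (hℓ _ _).2
      · simpa using hB.le
  obtain ⟨C, hC⟩ := hFbound
  have hFP : Integrable F P :=
    Integrable.of_bound hFmeas.aestronglyMeasurable C (.of_forall hC)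
  have hexp : ∀ t : ℝ, Integrable (fun p => exp (t * F p)) Q := by
    intro t
    refine Integrable.of_bound (C := exp (|t| * C))
      (measurable_exp.comp (hFmeas.const_mul t)).aestronglyMeasurable (.of_forall fun p => ?_)
    rw [Real.norm_eq_abs, abs_exp]
    refine exp_le_exp.2 ((le_abs_self _).trans ?_)
    rw [abs_mul]
    exact mul_le_mul_of_nonneg_left (hC p) (abs_nonneg t)
  have hmgf : ∀ t : ℝ, ∫ p, exp (t * F p) ∂Q ≤ exp (t ^ 2 * v / 2) := by
    intro t
    rw [hQ, integral_prod _ (hexp t)]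
    have hin : ∀ w, ∫ z, exp (t * F (w, z)) ∂(Measure.map Z μ) ≤ exp (t ^ 2 * v / 2) := by
      intro w
      rw [hZunif, integral_uniformPerm, inv_mul_le_iff₀ (by positivity)]
      exact sum_perm_exp_gap_le m u hm hu s B ℓ hℓ w t
    refine (integral_mono (hexp t).integral_prod_left (integrable_const _) hin).trans ?_
    simp
  have hint : ∫ ω, (Rtest m u s ℓ (W ω) (Z ω) - Rtrain m u s ℓ (W ω) (Z ω)) ∂μ = ∫ p, F p ∂P :=
    (integral_map hWZ.aemeasurable hFmeas.aestronglyMeasurable).symm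
  set D := ∫ p, F p ∂P with hD
  have hI : mutInfo μ W Z = ∫ p, llr P Q p ∂P := rfl
  have hDV : ∀ t : ℝ, t * D ≤ mutInfo μ W Z + t ^ 2 * v / 2 := by
    intro t
    have h := integral_le_llr_add_log P Q hac hllr (fun p => t * F p) (hFP.const_mul t) (hexp t)
    rw [integral_const_mul, ← hI] at h
    have h2 : log (∫ p, exp (t * F p) ∂Q) ≤ t ^ 2 * v / 2 := by
      rw [← log_exp (t ^ 2 * v / 2)]
      exact log_le_log (integral_exp_pos (hexp t)) (hmgf t)
    linarith
  rw [hint]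
  apply Real.abs_le_sqrt
  -- `t = D / v` optimises the bound `hDV`.
  have h := hDV (D / v)
  have e1 : D / v * D = D ^ 2 / v := by ring
  have e2 : (D / v) ^ 2 * v / 2 = D ^ 2 / v / 2 := by field_simp
  rw [e1, e2] at h
  have h3 : D ^ 2 / v ≤ 2 * mutInfo μ W Z := by linarith
  rw [div_le_iff₀ hvpos] at h3
  refine h3.trans (le_of_eq ?_)
  rw [hv]
  field_simp
  ring

end
end

section
/- Case u = m, n = 2m. The map (z̃, u) ↦ 𝒵(z̃, u) is a bijection from the product of the set of transductive supersample sequences (the sequences of m pairwise disjoint ascending pairs covering {1,…,2m}, of which there are (2m)!/2^m) with {0,1}^m onto the set of permutations of {1,…,2m}. Consequently, if Z̃ is uniformly distributed on the set of transductive supersample sequences and U is uniform on {0,1}^m and independent of Z̃, then 𝒵(Z̃,U) is uniformly distributed on the permutations of {1,…,2m}; and for every Markov kernel κ from permutations of {1,…,2m} to probability measures on 𝒲, if W given (Z̃,U) has law κ(𝒵(Z̃,U)), then E_{W,Z̃,U}[ R_test(W,Z̃,U) − R_train(W,Z̃,U) ] = E_{W,Z}[ R_test(W,Z) − R_train(W,Z)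 ], where on the right Z is a uniform random permutation and W given Z has law κ(Z). -/
/-!
Pairing position `i` with position `m + i` identifies `Fin m × Bool` with `Fin (2m)` (`posEquiv`).
Under this identification `𝒵(z̃, u)` is `pairMap z̃` precomposed with the involution that swaps the
two components of the `i`-th pair when `u i = true`, so `𝒵(z̃, u)` is a permutation exactly when
`pairMap z̃` is bijective. Conversely a permutation `z` determines `(z̃, u)`: the `i`-th pair must be
the sorted version of `(z i, z (m + i))`, and `u i` records whether sorting required a swap. This
is `indSeq_bijOn`; the count and the equalities of averages are the same bijection read through
cardinalities and finite sums (`sum_supersample`), the errors being equal pointwise.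
-/

open MeasureTheory ProbabilityTheory Real
open scoped ENNReal

noncomputable section

/-- The map sending `(i, b)` to the `b`-th component of the `i`-th pair of a
candidate supersample. -/
def pairMap (m : ℕ) (zt : Fin m → Fin (2 * m) × Fin (2 * m)) :
    Fin m × Bool → Fin (2 * m) :=
  fun p => if p.2 then (zt p.1).2 else (zt p.1).1

/-- A transductive supersample: a sequence of `m` pairwise disjoint ascending
pairs covering `Fin (2m)`. -/
def IsSupersample (m : ℕ) (zt : Fin m → Fin (2 * m) × Fin (2 * m)) : Prop :=
  (∀ i, (zt i).1 < (zt i).2) ∧ Function.Bijective (pairMap m zt)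

instance (m : ℕ) : DecidablePred (IsSupersample m) := fun zt =>
  inferInstanceAs
    (Decidable ((∀ i, (zt i).1 < (zt i).2) ∧ Function.Bijective (pairMap m zt)))

/-- Transductive training error for a supersample `zt` and selector `u`:
`R_train(w, z̃, u) = (1/m)·Σ_i ℓ(w, s(z̃_{i, u_i}))` (`u i = false` selects the
first component, `u i = true` the second). -/
def RtrainSS {S W : Type*} (m : ℕ) (s : Fin (2 * m) → S) (ℓ : W → S → ℝ) (w : W)
    (zt : Fin m → Fin (2 * m) × Fin (2 * m)) (u : Fin m → Bool) : ℝ :=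
  (∑ i : Fin m, ℓ w (s (if u i then (zt i).2 else (zt i).1))) / m

/-- Transductive test error for a supersample `zt` and selector `u`:
`R_test(w, z̃, u) = (1/m)·Σ_i ℓ(w, s(z̃_{i, 1−u_i}))`. -/
def RtestSS {S W : Type*} (m : ℕ) (s : Fin (2 * m) → S) (ℓ : W → S → ℝ) (w : W)
    (zt : Fin m → Fin (2 * m) × Fin (2 * m)) (u : Fin m → Bool) : ℝ :=
  (∑ i : Fin m, ℓ w (s (if u i then (zt i).1 else (zt i).2))) / m

/-- Disintegrated mutual information given the event `A`: the KL divergence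
between the conditional joint law of `(X, Y)` given `A` and the product of the
corresponding conditional marginal laws. -/
def condMI {Ω α β : Type*} [MeasurableSpace Ω] [MeasurableSpace α] [MeasurableSpace β]
    (μ : Measure Ω) (X : Ω → α) (Y : Ω → β) (A : Set Ω) : ℝ :=
  klDivR (Measure.map (fun ω => (X ω, Y ω)) (μ[|A]))
    ((Measure.map X (μ[|A])).prod (Measure.map Y (μ[|A])))

/-- The sequence `𝒵(z̃, u)` induced by a supersample `z̃` and a selector `u`:
its first `m` entries are `z̃_{i, u_i}` and its last `m` entries are
`z̃_{i, 1 − u_i}`. -/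
def indSeq (m : ℕ) (zt : Fin m → Fin (2 * m) × Fin (2 * m)) (u : Fin m → Bool) :
    Fin (2 * m) → Fin (2 * m) := fun i =>
  if h : (i : ℕ) < m then
    (if u ⟨(i : ℕ), h⟩ then (zt ⟨(i : ℕ), h⟩).2 else (zt ⟨(i : ℕ), h⟩).1)
  else
    (if u ⟨(i : ℕ) - m, by have := i.isLt; omega⟩
      then (zt ⟨(i : ℕ) - m, by have := i.isLt; omega⟩).1
      else (zt ⟨(i : ℕ) - m, by have := i.isLt; omega⟩).2)

/-- Transductive training error along a sampling sequence `z`: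
average loss over the first `m` entries of `z`. -/
def Rtrain2 {S W : Type*} (m : ℕ) (s : Fin (2 * m) → S) (ℓ : W → S → ℝ) (w : W)
    (z : Fin (2 * m) → Fin (2 * m)) : ℝ :=
  (∑ i : Fin (2 * m), if (i : ℕ) < m then ℓ w (s (z i)) else 0) / m

/-- Transductive test error along a sampling sequence `z`:
average loss over the last `m` entries of `z`. -/
def Rtest2 {S W : Type*} (m : ℕ) (s : Fin (2 * m) → S) (ℓ : W → S → ℝ) (w : W)
    (z : Fin (2 * m) → Fin (2 * m)) : ℝ :=
  (∑ i : Fin (2 * m), if m ≤ (i : ℕ) then ℓ w (s (z i)) else 0) / m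

/-- The `i`-th training position, in the first half. -/
def loPos (m : ℕ) (i : Fin m) : Fin (2 * m) := ⟨i, by omega⟩

/-- The `i`-th test position, in the second half. -/
def hiPos (m : ℕ) (i : Fin m) : Fin (2 * m) := ⟨m + i, by omega⟩

/-- Positions as pairs: `(i, false)` is the `i`-th training position, `(i, true)` the `i`-th
test position. -/
def posEquiv (m : ℕ) : Fin m × Bool ≃ Fin (2 * m) where
  toFun p := if p.2 then hiPos m p.1 else loPos m p.1
  invFun j := if h : (j : ℕ) < m then (⟨j, h⟩, false) else (⟨j - m, by omega⟩, true)
  left_inv := by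
    rintro ⟨i, b⟩
    cases b <;> simp [hiPos, loPos]
  right_inv := by
    intro j
    by_cases h : (j : ℕ) < m
    · simp [h, loPos]
    · simp only [h, dite_false, if_true, hiPos]
      ext
      simp only
      omega

/-- The involution of `Fin m × Bool` swapping the two components over each `i` with `u i = true`. -/
def flipEquiv (m : ℕ) (u : Fin m → Bool) : Fin m × Bool ≃ Fin m × Bool where
  toFun p := (p.1, xor p.2 (u p.1))
  invFun p := (p.1, xor p.2 (u p.1))
  left_inv p := by simp
  right_inv p := by simp

lemma indSeq_loPos (m : ℕ) (zt : Fin m → Fin (2 * m) × Fin (2 * m)) (u : Fin m → Bool)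
    (i : Fin m) : indSeq m zt u (loPos m i) = if u i then (zt i).2 else (zt i).1 := by
  cases h : u i <;> simp [indSeq, loPos, h]

lemma indSeq_hiPos (m : ℕ) (zt : Fin m → Fin (2 * m) × Fin (2 * m)) (u : Fin m → Bool)
    (i : Fin m) : indSeq m zt u (hiPos m i) = if u i then (zt i).1 else (zt i).2 := by
  cases h : u i <;> simp [indSeq, hiPos, h]

lemma indSeq_comp_posEquiv (m : ℕ) (zt : Fin m → Fin (2 * m) × Fin (2 * m)) (u : Fin m → Bool) :
    indSeq m zt u ∘ posEquiv m = pairMap m zt ∘ flipEquiv m u := by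
  funext ⟨i, b⟩
  cases b <;> cases h : u i <;>
    simp [posEquiv, flipEquiv, pairMap, indSeq_loPos, indSeq_hiPos, h]

lemma bijective_indSeq_iff (m : ℕ) (zt : Fin m → Fin (2 * m) × Fin (2 * m)) (u : Fin m → Bool) :
    Function.Bijective (indSeq m zt u) ↔ Function.Bijective (pairMap m zt) := by
  rw [← Function.Bijective.of_comp_iff (indSeq m zt u) (posEquiv m).bijective,
    indSeq_comp_posEquiv, Function.Bijective.of_comp_iff _ (flipEquiv m u).bijective]

lemma indSeq_bijOn (m : ℕ) :
    Set.BijOn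
      (fun p : (Fin m → Fin (2 * m) × Fin (2 * m)) × (Fin m → Bool) => indSeq m p.1 p.2)
      {p | IsSupersample m p.1} {z | Function.Bijective z} := by
  refine ⟨fun p hp => (bijective_indSeq_iff m p.1 p.2).2 hp.2, ?_, ?_⟩
  · rintro ⟨zt, u⟩ ⟨hlt, -⟩ ⟨zt', u'⟩ ⟨hlt', -⟩ h
    simp only at h hlt hlt'
    have key : ∀ i, zt i = zt' i ∧ u i = u' i := by
      intro i
      have h1 := congrFun h (loPos m i)
      have h2 := congrFun h (hiPos m i)
      rw [indSeq_loPos, indSeq_loPos] at h1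
      rw [indSeq_hiPos, indSeq_hiPos] at h2
      have a := hlt i
      have b := hlt' i
      -- If `u i ≠ u' i`, the two pairs are reverses of each other, so cannot both ascend.
      cases hu : u i <;> cases hu' : u' i <;> simp only [hu, hu', if_true, if_false,
        Bool.false_eq_true] at h1 h2
      · exact ⟨Prod.ext h1 h2, rfl⟩
      · rw [h1, h2] at a
        exact absurd a b.asymm
      · rw [h1, h2] at a
        exact absurd a b.asymm
      · exact ⟨Prod.ext h2 h1, rfl⟩
    exact Prod.ext (funext fun i => (key i).1) (funext fun i => (key i).2)
  · intro z hz
    let u : Fin m → Bool := fun i => decide (z (hiPos m i) < z (loPos m i))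
    let zt : Fin m → Fin (2 * m) × Fin (2 * m) := fun i =>
      if u i then (z (hiPos m i), z (loPos m i)) else (z (loPos m i), z (hiPos m i))
    have hind : indSeq m zt u = z := by
      have : indSeq m zt u ∘ posEquiv m = z ∘ posEquiv m := by
        funext ⟨i, b⟩
        cases b <;> cases h : u i <;>
          simp [posEquiv, indSeq_loPos, indSeq_hiPos, h, zt]
      exact (posEquiv m).surjective.injective_comp_right this
    refine ⟨(zt, u), ⟨fun i => ?_, ?_⟩, hind⟩
    · by_cases h : z (hiPos m i) < z (loPos m i)
      · simp [zt, u, h]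
      · have hne : z (loPos m i) ≠ z (hiPos m i) := by
          intro he
          have h' := congrArg Fin.val (hz.1 he)
          simp only [loPos, hiPos] at h'
          omega
        simpa [zt, u, h] using lt_of_le_of_ne (not_lt.1 h) hne
    · rw [← bijective_indSeq_iff m zt u, hind]
      exact hz

lemma sum_supersample {M : Type*} [AddCommMonoid M] (m : ℕ)
    (g : (Fin (2 * m) → Fin (2 * m)) → M) :
    ∑ zt ∈ Finset.univ.filter (IsSupersample m), ∑ v : Fin m → Bool, g (indSeq m zt v)
      = ∑ z : Equiv.Perm (Fin (2 * m)), g ⇑z := by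
  rw [← Finset.sum_product']
  have hb := indSeq_bijOn m
  refine Finset.sum_bij
    (fun p hp => Equiv.ofBijective (indSeq m p.1 p.2) (hb.mapsTo (by simpa using hp)))
    (fun _ _ => Finset.mem_univ _) ?_ ?_ (fun _ _ => rfl)
  · intro p hp q hq h
    exact hb.injOn (by simpa using hp) (by simpa using hq) (congrArg DFunLike.coe h)
  · intro z _
    obtain ⟨p, hp, hpz⟩ := hb.surjOn z.bijective
    exact ⟨p, by simpa using hp, Equiv.ext fun i => congrFun hpz i⟩

lemma card_supersample (m : ℕ) :
    (Finset.univ.filter (IsSupersample m)).card * 2 ^ m = (2 * m).factorial := by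
  simpa [Fintype.card_perm] using sum_supersample (M := ℕ) m (fun _ => 1)

lemma sum_positions (m : ℕ) (f : Fin (2 * m) → ℝ) :
    ∑ j, f j = ∑ i : Fin m, (f (loPos m i) + f (hiPos m i)) := by
  rw [← (posEquiv m).sum_comp, Fintype.sum_prod_type]
  refine Finset.sum_congr rfl fun i _ => ?_
  simp [posEquiv, add_comm]

lemma Rtrain2_indSeq {S W : Type*} (m : ℕ) (s : Fin (2 * m) → S) (ℓ : W → S → ℝ) (w : W)
    (zt : Fin m → Fin (2 * m) × Fin (2 * m)) (u : Fin m → Bool) :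
    Rtrain2 m s ℓ w (indSeq m zt u) = RtrainSS m s ℓ w zt u := by
  simp only [Rtrain2, RtrainSS, sum_positions, indSeq_loPos, indSeq_hiPos]
  simp [loPos, hiPos]

lemma Rtest2_indSeq {S W : Type*} (m : ℕ) (s : Fin (2 * m) → S) (ℓ : W → S → ℝ) (w : W)
    (zt : Fin m → Fin (2 * m) × Fin (2 * m)) (u : Fin m → Bool) :
    Rtest2 m s ℓ w (indSeq m zt u) = RtestSS m s ℓ w zt u := by
  simp only [Rtest2, RtestSS, sum_positions, indSeq_loPos, indSeq_hiPos]
  simp [loPos, hiPos, not_le.2 (Fin.isLt _)]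

theorem statement5 {S 𝒲 : Type*} [MeasurableSpace S] [MeasurableSpace 𝒲]
    (m : ℕ) (hm : 1 ≤ m)
    (s : Fin (2 * m) → S) (ℓ : 𝒲 → S → ℝ)
    (hℓmeas : Measurable fun p : 𝒲 × S => ℓ p.1 p.2)
    -- a Markov kernel from sampling sequences to probability measures on 𝒲
    (κ : (Fin (2 * m) → Fin (2 * m)) → Measure 𝒲)
    (hκ : ∀ z, IsProbabilityMeasure (κ z)) :
    -- (a) `(z̃, u) ↦ 𝒵(z̃, u)` is a bijection from supersamples × selectors
    --     onto the permutations of `Fin (2m)`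
    (Set.BijOn
      (fun p : (Fin m → Fin (2 * m) × Fin (2 * m)) × (Fin m → Bool) =>
        indSeq m p.1 p.2)
      {p | IsSupersample m p.1} {z | Function.Bijective z}) ∧
    -- (b) there are `(2m)!/2^m` transductive supersamples
    ((Finset.univ.filter (IsSupersample m)).card = (2 * m).factorial / 2 ^ m) ∧
    -- (c) consequently, if `Z̃` is uniform on supersamples and `U` is uniform on
    --     `{0,1}^m` and independent of `Z̃`, then `𝒵(Z̃, U)` is uniform on the
    --     permutations of `Fin (2m)`: summing any observable `g` of `𝒵(z̃, u)`
    --     uniformly over (supersample, selector) pairs agrees with summing `g`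
    --     uniformly over permutations
    (∀ g : (Fin (2 * m) → Fin (2 * m)) → ℝ,
      (((Finset.univ.filter (IsSupersample m)).card * 2 ^ m : ℝ))⁻¹ *
          ∑ zt ∈ Finset.univ.filter (IsSupersample m), ∑ v : Fin m → Bool,
            g (indSeq m zt v)
        = (((2 * m).factorial : ℝ))⁻¹ * ∑ z : Equiv.Perm (Fin (2 * m)), g ⇑z) ∧
    -- (d) for every Markov kernel `κ`, with `W` drawn from `κ(𝒵(Z̃, U))` given
    --     `(Z̃, U)`, the expected supersample generalization gap equals the
    --     expected generalization gap under the uniform random permutation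
    ((((Finset.univ.filter (IsSupersample m)).card * 2 ^ m : ℝ))⁻¹ *
        ∑ zt ∈ Finset.univ.filter (IsSupersample m), ∑ v : Fin m → Bool,
          ∫ w, (RtestSS m s ℓ w zt v - RtrainSS m s ℓ w zt v) ∂(κ (indSeq m zt v))
      = (((2 * m).factorial : ℝ))⁻¹ *
        ∑ z : Equiv.Perm (Fin (2 * m)),
          ∫ w, (Rtest2 m s ℓ w ⇑z - Rtrain2 m s ℓ w ⇑z) ∂(κ ⇑z)) := by
  have hcard : ((Finset.univ.filter (IsSupersample m)).card * 2 ^ m : ℝ)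
      = ((2 * m).factorial : ℝ) := by
    exact_mod_cast card_supersample m
  refine ⟨indSeq_bijOn m, ?_, fun g => ?_, ?_⟩
  · exact (Nat.div_eq_of_eq_mul_left (by positivity) (card_supersample m).symm).symm
  · rw [hcard, sum_supersample m g]
  · rw [hcard, ← sum_supersample m
      (fun z => ∫ w, (Rtest2 m s ℓ w z - Rtrain2 m s ℓ w z) ∂(κ z))]
    simp only [Rtrain2_indSeq, Rtest2_indSeq]

end
end

section
/- Case u = m, n = 2m. Let W be a 𝒲-valued random variable jointly distributed with (Z̃,U), and suppose 0 ≤ ℓ(w, s i) ≤ B for all w ∈ 𝒲 and all i. Then | E_{W,Z̃,U}[ R_test(W,Z̃,U) − R_train(W,Z̃,U) ] | ≤ E_{Z̃}[ sqrt( (2·B²/m) · I^{Z̃}(W;U) ) ]. -/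
/-!
Fix a realization `z` of the supersample. Then the gap `R_test - R_train` is the Rademacher sum
`(1/m) Σ_i ε_i (ℓ(w, s(z_{i,1})) - ℓ(w, s(z_{i,0})))` with `ε_i = ±1` determined by `U_i`. When
`U` is uniform and independent of `W`, its moment generating function at `t` is a product of
hyperbolic cosines, at most `exp (t² (B²/m) / 2)` (`rademacher_mgf_le`). The Donsker–Varadhan
inequality transports such a subgaussian bound to the true joint law of `(W, U)` at the price of
the relative entropy (`abs_integral_le_sqrt_llr`), which gives the claim for a fixed `z`
(`abs_integral_gap_le`). Averaging over the finitely many values of the supersample concludes,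
since `U` stays uniform conditionally on each of them.

The real-valued divergence is a Bochner integral, so integrability of the log-likelihood ratio
has to be checked: as `U` takes `2^m` equally likely values, the joint law is at most `2^m` times
the product of its marginals, so its density is bounded (`joint_le_smul_prod`,
`integrable_llr_of_le_smul`).
-/

open MeasureTheory ProbabilityTheory Real
open scoped ENNReal

noncomputable section

/-- **Donsker–Varadhan for a subgaussian function.** If `f` is bounded and has variance proxy `c`
under `Q`, then its `P`-mean is controlled by the relative entropy of `P` with respect to `Q`. -/
lemma abs_integral_le_sqrt_llr {α : Type*} [MeasurableSpace α] (P Q : Measure α)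
    [IsProbabilityMeasure P] [IsProbabilityMeasure Q] (hPQ : P ≪ Q)
    (hint : Integrable (llr P Q) P) (f : α → ℝ) (hf : Measurable f) (C : ℝ)
    (hC : ∀ x, |f x| ≤ C) (c : ℝ) (hc : 0 < c)
    (hmgf : ∀ t : ℝ, ∫ x, exp (t * f x) ∂Q ≤ exp (t ^ 2 * c / 2)) :
    |∫ x, f x ∂P| ≤ sqrt (2 * c * ∫ x, llr P Q x ∂P) := by
  have key : ∀ t : ℝ, t * ∫ x, f x ∂P - t ^ 2 * c / 2 ≤ ∫ x, llr P Q x ∂P := by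
    intro t
    have hfP : Integrable (fun x => t * f x) P :=
      (Integrable.of_bound hf.aestronglyMeasurable C (.of_forall hC)).const_mul t
    have hexp : Integrable (fun x => exp (t * f x)) Q := by
      refine Integrable.of_bound (hf.const_mul t).exp.aestronglyMeasurable (exp (|t| * C))
        (.of_forall fun x => ?_)
      rw [Real.norm_eq_abs, abs_exp, exp_le_exp]
      calc t * f x ≤ |t * f x| := le_abs_self _
        _ = |t| * |f x| := abs_mul _ _
        _ ≤ |t| * C := mul_le_mul_of_nonneg_left (hC x) (abs_nonneg t)
    have := isProbabilityMeasure_tilted hexp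
    -- Gibbs' inequality for `P` relative to the exponentially tilted measure
    have hgibbs := InformationTheory.integral_llr_add_sub_measure_univ_nonneg
      (hPQ.trans (absolutelyContinuous_tilted hexp))
      (integrable_llr_tilted_right hPQ hfP hint hexp)
    rw [integral_llr_tilted_right hPQ hfP hexp hint, integral_const_mul] at hgibbs
    simp only [probReal_univ] at hgibbs
    have hlog : log (∫ x, exp (t * f x) ∂Q) ≤ t ^ 2 * c / 2 := by
      rw [← log_exp (t ^ 2 * c / 2)]
      exact log_le_log (integral_exp_pos hexp) (hmgf t)
    linarith
  apply abs_le_sqrt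
  -- the optimal choice of the parameter
  have h := key ((∫ x, f x ∂P) / c)
  set E := ∫ x, f x ∂P
  have h2 : E / c * E - (E / c) ^ 2 * c / 2 = E ^ 2 / (2 * c) := by
    field_simp
    ring
  rw [h2, div_le_iff₀ (by positivity)] at h
  linarith

lemma rademacher_mgf_le {m : ℕ} (a : Fin m → ℝ) :
    ∑ v : Fin m → Bool, ((2 : ℝ) ^ m)⁻¹ * exp (∑ i, if v i then -a i else a i)
      ≤ exp (∑ i, a i ^ 2 / 2) := by
  have h : ∑ v : Fin m → Bool, ((2 : ℝ) ^ m)⁻¹ * exp (∑ i, if v i then -a i else a i)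
      = ∏ i, cosh (a i) := by
    have h1 : ∀ i, cosh (a i) = ∑ b : Bool, 2⁻¹ * exp (if b then -a i else a i) := by
      intro i
      rw [Real.cosh_eq]
      simp
      ring
    simp_rw [h1]
    rw [Finset.prod_univ_sum, Fintype.piFinset_univ]
    refine Finset.sum_congr rfl fun v _ => ?_
    rw [exp_sum, Finset.prod_mul_distrib]
    simp
  rw [h, exp_sum]
  exact Finset.prod_le_prod (fun i _ => (cosh_pos _).le) fun i _ => cosh_le_exp_half_sq _

lemma integrable_llr_of_le_smul {α : Type*} [MeasurableSpace α] (P Q : Measure α)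
    [IsFiniteMeasure P] [IsFiniteMeasure Q] (hPQ : P ≪ Q) (N : ℕ)
    (h : ∀ s, MeasurableSet s → P s ≤ N * Q s) : Integrable (llr P Q) P := by
  rw [← InformationTheory.integrable_klFun_rnDeriv_iff hPQ]
  have hle : P.rnDeriv Q ≤ᵐ[Q] fun _ => (N : ℝ≥0∞) := by
    refine ae_le_of_forall_setLIntegral_le_of_sigmaFinite (P.measurable_rnDeriv Q)
      fun s hs _ => ?_
    rw [setLIntegral_const]
    exact (Measure.setLIntegral_rnDeriv_le s).trans (h s hs)
  obtain ⟨D, hD⟩ := (isCompact_Icc (a := (0 : ℝ)) (b := N)).exists_bound_of_continuousOn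
    InformationTheory.continuous_klFun.continuousOn
  refine Integrable.of_bound (C := D) ?_ ?_
  · exact (InformationTheory.measurable_klFun.comp
      (P.measurable_rnDeriv Q).ennreal_toReal).aestronglyMeasurable
  · filter_upwards [hle] with x hx
    refine hD _ ⟨ENNReal.toReal_nonneg, ?_⟩
    simpa using ENNReal.toReal_mono (ENNReal.natCast_ne_top N) hx

/-- If `U` takes each of its values with probability `1/N`, the joint law of `(W, U)` is at most
`N` times the product of the marginals: slice over the values of `U`. -/
lemma joint_le_smul_prod {Ω 𝒲 β : Type*} [MeasurableSpace Ω] [MeasurableSpace 𝒲]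
    [MeasurableSpace β] [Fintype β] [MeasurableSingletonClass β]
    (ν : Measure Ω) [IsProbabilityMeasure ν] (W : Ω → 𝒲) (U : Ω → β)
    (hW : Measurable W) (hU : Measurable U) (N : ℕ) (hN : N ≠ 0)
    (hunif : ∀ v, ν (U ⁻¹' {v}) = (N : ℝ≥0∞)⁻¹) (s : Set (𝒲 × β)) (hs : MeasurableSet s) :
    ν.map (fun ω => (W ω, U ω)) s ≤ N * ((ν.map W).prod (ν.map U)) s := by
  have := Measure.isProbabilityMeasure_map (μ := ν) hW.aemeasurable
  have := Measure.isProbabilityMeasure_map (μ := ν) hU.aemeasurable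
  rw [Measure.prod_apply_symm hs, lintegral_fintype, Finset.mul_sum,
    Measure.map_apply (hW.prodMk hU) hs]
  have hcov : (fun ω => (W ω, U ω)) ⁻¹' s ⊆
      ⋃ v ∈ (Finset.univ : Finset β), W ⁻¹' ((fun w => (w, v)) ⁻¹' s) := by
    intro ω hω
    simp only [Set.mem_iUnion]
    exact ⟨U ω, Finset.mem_univ _, hω⟩
  refine (measure_mono hcov).trans ((measure_biUnion_finset_le _ _).trans ?_)
  refine Finset.sum_le_sum fun v _ => ?_
  rw [Measure.map_apply hW (measurable_prodMk_right hs),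
    Measure.map_apply hU (measurableSet_singleton v), hunif v, mul_comm (ν _), ← mul_assoc,
    ENNReal.mul_inv_cancel (by exact_mod_cast hN) (ENNReal.natCast_ne_top N), one_mul]

/-- The gap between test and training error is a signed sum of loss differences. -/
lemma gap_eq {S 𝒲 : Type*} (m : ℕ) (s : Fin (2 * m) → S) (ℓ : 𝒲 → S → ℝ) (w : 𝒲)
    (z : Fin m → Fin (2 * m) × Fin (2 * m)) (u : Fin m → Bool) :
    RtestSS m s ℓ w z u - RtrainSS m s ℓ w z u =
      ∑ i, if u i then -((ℓ w (s (z i).2) - ℓ w (s (z i).1)) / m)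
        else (ℓ w (s (z i).2) - ℓ w (s (z i).1)) / m := by
  rw [RtestSS, RtrainSS, ← sub_div, ← Finset.sum_sub_distrib, Finset.sum_div]
  refine Finset.sum_congr rfl fun i _ => ?_
  split_ifs <;> ring

lemma abs_gap_le {S 𝒲 : Type*} (m : ℕ) (hm : 1 ≤ m) (s : Fin (2 * m) → S) (B : ℝ)
    (ℓ : 𝒲 → S → ℝ)
    (hℓ : ∀ (w : 𝒲) (i : Fin (2 * m)), 0 ≤ ℓ w (s i) ∧ ℓ w (s i) ≤ B) (w : 𝒲)
    (z : Fin m → Fin (2 * m) × Fin (2 * m)) (u : Fin m → Bool) :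
    |RtestSS m s ℓ w z u - RtrainSS m s ℓ w z u| ≤ B := by
  have hm0 : (0 : ℝ) < m := by exact_mod_cast hm
  rw [gap_eq]
  refine (Finset.abs_sum_le_sum_abs _ _).trans ?_
  have : ∀ i ∈ (Finset.univ : Finset (Fin m)),
      |if u i then -((ℓ w (s (z i).2) - ℓ w (s (z i).1)) / m)
        else (ℓ w (s (z i).2) - ℓ w (s (z i).1)) / m| ≤ B / m := by
    intro i _
    have hd : |(ℓ w (s (z i).2) - ℓ w (s (z i).1)) / m| ≤ B / m := by
      rw [abs_div, abs_of_pos hm0]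
      refine div_le_div_of_nonneg_right (abs_le.2 ⟨?_, ?_⟩) hm0.le
      all_goals linarith [hℓ w (z i).1, hℓ w (z i).2]
    split_ifs
    · rwa [abs_neg]
    · exact hd
  refine (Finset.sum_le_sum this).trans (le_of_eq ?_)
  simp
  field_simp

lemma measurable_gap {S 𝒲 : Type*} [MeasurableSpace S] [MeasurableSpace 𝒲] (m : ℕ)
    (s : Fin (2 * m) → S) (ℓ : 𝒲 → S → ℝ)
    (hℓmeas : Measurable fun p : 𝒲 × S => ℓ p.1 p.2) :
    Measurable fun p : 𝒲 × (Fin m → Fin (2 * m) × Fin (2 * m)) × (Fin m → Bool) =>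
      RtestSS m s ℓ p.1 p.2.1 p.2.2 - RtrainSS m s ℓ p.1 p.2.1 p.2.2 := by
  have hsec : ∀ x : S, Measurable fun w => ℓ w x := fun x =>
    hℓmeas.comp measurable_prodMk_right
  have hfix : ∀ z u, Measurable fun w => RtestSS m s ℓ w z u - RtrainSS m s ℓ w z u := by
    intro z u
    unfold RtestSS RtrainSS
    exact ((Finset.measurable_sum _ fun i _ => hsec _).div_const _).sub
      ((Finset.measurable_sum _ fun i _ => hsec _).div_const _)
  exact measurable_from_prod_countable_left fun q => hfix q.1 q.2

/-- The bound for a fixed supersample `z`, under any law `ν` making `U` uniform. -/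
lemma abs_integral_gap_le {Ω S 𝒲 : Type*} [MeasurableSpace Ω] [MeasurableSpace S]
    [MeasurableSpace 𝒲] (m : ℕ) (hm : 1 ≤ m)
    (s : Fin (2 * m) → S) (B : ℝ) (hB : 0 < B)
    (ℓ : 𝒲 → S → ℝ) (hℓmeas : Measurable fun p : 𝒲 × S => ℓ p.1 p.2)
    (hℓ : ∀ (w : 𝒲) (i : Fin (2 * m)), 0 ≤ ℓ w (s i) ∧ ℓ w (s i) ≤ B)
    (ν : Measure Ω) [IsProbabilityMeasure ν]
    (W : Ω → 𝒲) (U : Ω → (Fin m → Bool)) (hWm : Measurable W) (hUm : Measurable U)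
    (hU : ∀ v : Fin m → Bool, ν (U ⁻¹' {v}) = ((2 ^ m : ℕ) : ℝ≥0∞)⁻¹)
    (z : Fin m → Fin (2 * m) × Fin (2 * m)) :
    |∫ ω, (RtestSS m s ℓ (W ω) z (U ω) - RtrainSS m s ℓ (W ω) z (U ω)) ∂ν|
      ≤ sqrt ((2 * B ^ 2 / m) * klDivR (ν.map fun ω => (W ω, U ω))
          ((ν.map W).prod (ν.map U))) := by
  have hm0 : (0 : ℝ) < m := by exact_mod_cast hm
  have hWU : Measurable fun ω => (W ω, U ω) := hWm.prodMk hUm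
  have := Measure.isProbabilityMeasure_map (μ := ν) hWm.aemeasurable
  have := Measure.isProbabilityMeasure_map (μ := ν) hUm.aemeasurable
  have := Measure.isProbabilityMeasure_map (μ := ν) hWU.aemeasurable
  have hle := joint_le_smul_prod ν W U hWm hUm (2 ^ m) (by positivity) hU
  have hac : ν.map (fun ω => (W ω, U ω)) ≪ (ν.map W).prod (ν.map U) := by
    refine Measure.AbsolutelyContinuous.mk fun t ht h0 => ?_
    have := hle t ht
    rw [h0, mul_zero] at this
    exact le_antisymm this bot_le
  let f : 𝒲 × (Fin m → Bool) → ℝ := fun p => RtestSS m s ℓ p.1 z p.2 - RtrainSS m s ℓ p.1 z p.2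
  have hf : Measurable f :=
    (measurable_gap m s ℓ hℓmeas).comp
      (measurable_fst.prodMk (measurable_const.prodMk measurable_snd))
  have hfB : ∀ p, |f p| ≤ B := fun p => abs_gap_le m hm s B ℓ hℓ p.1 z p.2
  have hmgf : ∀ t : ℝ, ∫ p, exp (t * f p) ∂((ν.map W).prod (ν.map U))
      ≤ exp (t ^ 2 * (B ^ 2 / m) / 2) := by
    intro t
    have hexp : Integrable (fun p => exp (t * f p)) ((ν.map W).prod (ν.map U)) := by
      refine Integrable.of_bound (hf.const_mul t).exp.aestronglyMeasurable (exp (|t| * B))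
        (.of_forall fun p => ?_)
      rw [Real.norm_eq_abs, abs_exp, exp_le_exp]
      calc t * f p ≤ |t * f p| := le_abs_self _
        _ = |t| * |f p| := abs_mul _ _
        _ ≤ |t| * B := mul_le_mul_of_nonneg_left (hfB p) (abs_nonneg t)
    rw [integral_prod _ hexp]
    have hw : ∀ w, ∫ v, exp (t * f (w, v)) ∂(ν.map U) ≤ exp (t ^ 2 * (B ^ 2 / m) / 2) := by
      intro w
      rw [integral_fintype .of_finite]
      have hreal : ∀ v, (ν.map U).real {v} = ((2 : ℝ) ^ m)⁻¹ := by
        intro v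
        rw [measureReal_def, Measure.map_apply hUm (measurableSet_singleton v), hU v]
        simp
      let a : Fin m → ℝ := fun i => t * ((ℓ w (s (z i).2) - ℓ w (s (z i).1)) / m)
      have hfa : ∀ v, t * f (w, v) = ∑ i, if v i then -a i else a i := by
        intro v
        simp only [f, gap_eq, Finset.mul_sum, a]
        refine Finset.sum_congr rfl fun i _ => ?_
        split_ifs <;> ring
      simp_rw [hreal, hfa, smul_eq_mul]
      refine (rademacher_mgf_le a).trans (exp_le_exp.2 ?_)
      have ha : ∀ i ∈ (Finset.univ : Finset (Fin m)),
          a i ^ 2 / 2 ≤ t ^ 2 * (B ^ 2 / m ^ 2) / 2 := by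
        intro i _
        have hd : (ℓ w (s (z i).2) - ℓ w (s (z i).1)) ^ 2 ≤ B ^ 2 :=
          sq_le_sq' (by linarith [hℓ w (z i).1, hℓ w (z i).2])
            (by linarith [hℓ w (z i).1, hℓ w (z i).2])
        simp only [a, mul_pow, div_pow]
        gcongr
      refine (Finset.sum_le_sum ha).trans (le_of_eq ?_)
      simp
      field_simp
    calc _ ≤ ∫ _, exp (t ^ 2 * (B ^ 2 / m) / 2) ∂(ν.map W) :=
          integral_mono hexp.integral_prod_left (integrable_const _) hw
      _ = _ := by simp
  have h := abs_integral_le_sqrt_llr _ _ hac (integrable_llr_of_le_smul _ _ hac _ hle) f hf B hfB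
    (B ^ 2 / m) (by positivity) hmgf
  rw [integral_map hWU.aemeasurable hf.aestronglyMeasurable] at h
  rw [klDivR, mul_div_assoc]
  exact h

theorem statement6 {Ω S 𝒲 : Type*} [MeasurableSpace Ω] [MeasurableSpace S] [MeasurableSpace 𝒲]
    (m : ℕ) (hm : 1 ≤ m)
    (s : Fin (2 * m) → S) (B : ℝ) (hB : 0 < B)
    (ℓ : 𝒲 → S → ℝ) (hℓmeas : Measurable fun p : 𝒲 × S => ℓ p.1 p.2)
    (hℓ : ∀ (w : 𝒲) (i : Fin (2 * m)), 0 ≤ ℓ w (s i) ∧ ℓ w (s i) ≤ B)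
    (μ : Measure Ω) [IsProbabilityMeasure μ]
    (W : Ω → 𝒲) (Zt : Ω → (Fin m → Fin (2 * m) × Fin (2 * m))) (U : Ω → (Fin m → Bool))
    (hWm : Measurable W) (hZtm : Measurable Zt) (hUm : Measurable U)
    -- Z̃ is uniformly distributed on the set of transductive supersamples
    (hZt : ∀ zt, μ (Zt ⁻¹' {zt}) =
      if IsSupersample m zt
        then ((Finset.univ.filter (IsSupersample m)).card : ℝ≥0∞)⁻¹ else 0)
    -- U is uniformly distributed on {0,1}^m
    (hU : ∀ v : Fin m → Bool, μ (U ⁻¹' {v}) = ((2 ^ m : ℕ) : ℝ≥0∞)⁻¹)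
    -- Z̃ and U are independent
    (hIndep : IndepFun Zt U μ) :
    |∫ ω, (RtestSS m s ℓ (W ω) (Zt ω) (U ω) - RtrainSS m s ℓ (W ω) (Zt ω) (U ω)) ∂μ|
      ≤ ∫ ω, Real.sqrt ((2 * B ^ 2 / m) * condMI μ W U (Zt ⁻¹' {Zt ω})) ∂μ := by
  let g : Ω → ℝ := fun ω =>
    RtestSS m s ℓ (W ω) (Zt ω) (U ω) - RtrainSS m s ℓ (W ω) (Zt ω) (U ω)
  let r : (Fin m → Fin (2 * m) × Fin (2 * m)) → ℝ := fun z =>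
    Real.sqrt ((2 * B ^ 2 / m) * condMI μ W U (Zt ⁻¹' {z}))
  have hg : Integrable g μ :=
    Integrable.of_bound ((measurable_gap m s ℓ hℓmeas).comp
      (hWm.prodMk (hZtm.prodMk hUm))).aestronglyMeasurable B
      (.of_forall fun ω => abs_gap_le m hm s B ℓ hℓ _ _ _)
  have hr : Integrable (fun ω => r (Zt ω)) μ := by
    have : Integrable r (μ.map Zt) := .of_finite
    exact this.comp_measurable hZtm
  have hmeas : ∀ z, MeasurableSet (Zt ⁻¹' {z}) := fun z => hZtm (measurableSet_singleton z)
  have hsplit : ∀ h : Ω → ℝ, Integrable h μ →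
      ∫ ω, h ω ∂μ = ∑ z, ∫ ω in Zt ⁻¹' {z}, h ω ∂μ := by
    intro h hh
    rw [← integral_iUnion_fintype hmeas
      (fun z z' hzz => Disjoint.preimage _ (by simpa using hzz)) fun z => hh.integrableOn,
      ← Set.preimage_iUnion, Set.iUnion_of_singleton, Set.preimage_univ,
      Measure.restrict_univ]
  change |∫ ω, g ω ∂μ| ≤ ∫ ω, r (Zt ω) ∂μ
  rw [hsplit g hg, hsplit _ hr]
  refine (Finset.abs_sum_le_sum_abs _ _).trans (Finset.sum_le_sum fun z _ => ?_)
  by_cases h0 : μ (Zt ⁻¹' {z}) = 0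
  · rw [Measure.restrict_eq_zero.2 h0]
    simp
  have hA : μ (Zt ⁻¹' {z}) ≠ ∞ := measure_ne_top _ _
  have := cond_isProbabilityMeasure (μ := μ) h0
  -- conditioning on `Zt = z` leaves `U` uniform, by independence
  have hUc : ∀ v, μ[|Zt ⁻¹' {z}] (U ⁻¹' {v}) = ((2 ^ m : ℕ) : ℝ≥0∞)⁻¹ := by
    intro v
    rw [cond_apply (hmeas z), hIndep.measure_inter_preimage_eq_mul _ _
      (measurableSet_singleton z) (measurableSet_singleton v), ← mul_assoc,
      ENNReal.inv_mul_cancel h0 hA, one_mul, hU v]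
  have hmain := abs_integral_gap_le m hm s B hB ℓ hℓmeas hℓ (μ[|Zt ⁻¹' {z}]) W U hWm hUm hUc z
  have hL : ∫ ω in Zt ⁻¹' {z}, g ω ∂μ =
      ∫ ω in Zt ⁻¹' {z}, (RtestSS m s ℓ (W ω) z (U ω) - RtrainSS m s ℓ (W ω) z (U ω)) ∂μ := by
    refine setIntegral_congr_fun (hmeas z) fun ω hω => ?_
    have hω' : Zt ω = z := hω
    simp only [g, hω']
  have hR : ∫ ω in Zt ⁻¹' {z}, r (Zt ω) ∂μ = μ.real (Zt ⁻¹' {z}) * r z := by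
    rw [setIntegral_congr_fun (g := fun _ => r z) (hmeas z) fun ω hω => by
      have hω' : Zt ω = z := hω
      simp only [hω']]
    simp
  have hpos : 0 < μ.real (Zt ⁻¹' {z}) := ENNReal.toReal_pos h0 hA
  rw [ProbabilityTheory.cond, integral_smul_measure, ← hL, ENNReal.toReal_inv, smul_eq_mul,
    abs_mul, abs_of_nonneg (inv_nonneg.2 ENNReal.toReal_nonneg)] at hmain
  rw [hR]
  exact (inv_mul_le_iff₀ hpos).1 hmain

end
end

section
/- Case u = m, n = 2m. Let W be a 𝒲-valued random variable jointly distributed with (Z̃,U), and suppose 0 ≤ r(ŷ, y) ≤ B for all ŷ ∈ ℝ^K and y ∈ 𝒴. For each i define the loss pair L_i := ( ℓ(W, s(Z̃_{i,0})), ℓ(W, s(Z̃_{i,1})) ) ∈ ℝ². Then | E_{W,Z̃,U}[ R_test(W,Z̃,U) − R_train(W,Z̃,U) ] | ≤ (B/m) · Σ_{i=1}^m E_{Z̃}[ sqrt( 2 · I^{Z̃}(L_i ; U_i) ) ]. -/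
/-!
Fix a realization `z̃` of the supersample and an index `i`, and condition on `Z̃ = z̃`. By
independence `U_i` is still a fair coin, so under the product of the conditional marginals of
`L_i = (a, b)` and `U_i` the signed difference `g = ±(a - b)`, with sign given by `U_i`, has moment
generating function `E[cosh (t (a - b))] ≤ exp (t² B² / 2)` (`integral_exp_prod_le`). Under the joint
law, `E[g]` is the conditional mean of the `i`-th summand of the test-minus-train gap. The
variational inequality behind Donsker–Varadhan turns the sub-Gaussian bound under the product law
into `|E[g]| ≤ B √(2 KL)` under the joint law (`abs_integral_le_of_subgaussian`).

The divergence here is a Bochner integral of the log-likelihood ratio, so its integrability has to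
be established. It holds because one variable is a fair coin: the joint law is at most twice the
product law (`map_prod_le_two_smul`), so the density takes values in `[0, 2]`, where `x log x` is
bounded.

Averaging over the finitely many values of `z̃` and summing over `i` gives the theorem.
-/

open MeasureTheory ProbabilityTheory Real
open scoped ENNReal

noncomputable section

/-- Fenchel–Young inequality for the conjugate pair `p log p - p` and `exp a`. -/
lemma mul_le_mul_log_sub_add_exp {p : ℝ} (hp : 0 ≤ p) (a : ℝ) :
    p * a ≤ p * log p - p + exp a := by
  rcases hp.eq_or_lt with rfl | hp
  · simpa using (exp_pos a).le
  · have h := add_one_le_exp (a - log p)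
    rw [exp_sub, exp_log hp, le_div_iff₀ hp] at h
    linarith

/-- Transport inequality: a bounded function that is sub-Gaussian with variance proxy `B²` under `Q`
has mean at most `B √(2 KL(P ‖ Q))` under `P`. The domination `P ≤ 2 • Q` makes the log-likelihood
ratio `P`-integrable. -/
lemma abs_integral_le_of_subgaussian {α : Type*} [MeasurableSpace α] (P Q : Measure α)
    [IsProbabilityMeasure P] [IsProbabilityMeasure Q] (hPQ : P ≤ (2 : ℝ≥0∞) • Q)
    (g : α → ℝ) (hg : Measurable g) (B : ℝ) (hB : 0 < B) (hgB : ∀ x, |g x| ≤ B)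
    (hmgf : ∀ t : ℝ, ∫ x, exp (t * g x) ∂Q ≤ exp (t ^ 2 * B ^ 2 / 2)) :
    |∫ x, g x ∂P| ≤ B * sqrt (2 * klDivR P Q) := by
  have hac : P ≪ Q :=
    (Measure.absolutelyContinuous_of_le hPQ).trans Measure.smul_absolutelyContinuous
  have hle : ∀ᵐ x ∂Q, P.rnDeriv Q x ≤ 2 := by
    refine ae_le_of_forall_setLIntegral_le_of_sigmaFinite (Measure.measurable_rnDeriv P Q)
      (g := fun _ => 2) fun A _ _ => ?_
    calc ∫⁻ x in A, P.rnDeriv Q x ∂Q ≤ P A := Measure.setLIntegral_rnDeriv_le A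
      _ ≤ ((2 : ℝ≥0∞) • Q) A := hPQ A
      _ = ∫⁻ _ in A, 2 ∂Q := by simp
  set p : α → ℝ := fun x => (P.rnDeriv Q x).toReal with hp_def
  have hpm : Measurable p := (Measure.measurable_rnDeriv P Q).ennreal_toReal
  have hp0 : ∀ x, 0 ≤ p x := fun x => ENNReal.toReal_nonneg
  have hp2 : ∀ᵐ x ∂Q, p x ≤ 2 := by
    filter_upwards [hle] with x hx
    simpa using ENNReal.toReal_mono (by simp) hx
  have hpint : Integrable p Q := Measure.integrable_toReal_rnDeriv
  have hp1 : ∫ x, p x ∂Q = 1 := by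
    simpa using Measure.integral_toReal_rnDeriv hac
  have hplog : Integrable (fun x => p x * log (p x)) Q := by
    refine Integrable.of_bound (hpm.mul hpm.log).aestronglyMeasurable 2 ?_
    filter_upwards [hp2] with x hx
    rw [Real.norm_eq_abs, abs_le]
    rcases (hp0 x).eq_or_lt with h0 | h0
    · simp [← h0]
    · have h1 := log_le_sub_one_of_pos h0
      have h2 := one_sub_inv_le_log_of_pos h0
      have h3 : p x * (1 - (p x)⁻¹) ≤ p x * log (p x) := mul_le_mul_of_nonneg_left h2 h0.le
      rw [mul_sub, mul_inv_cancel₀ h0.ne'] at h3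
      constructor
      · linarith
      · nlinarith
  have hKL : ∫ x, p x * log (p x) ∂Q = klDivR P Q := integral_rnDeriv_mul_log hac
  have hgP : ∫ x, p x * g x ∂Q = ∫ x, g x ∂P := integral_rnDeriv_smul hac
  have hpg : Integrable (fun x => p x * g x) Q :=
    hpint.mul_bdd (c := B) hg.aestronglyMeasurable (Filter.Eventually.of_forall hgB)
  have hdiff : Integrable (fun x => p x * log (p x) - p x) Q := hplog.sub hpint
  have hexp : ∀ t : ℝ, Integrable (fun x => exp (t * g x)) Q := fun t => by
    refine Integrable.of_bound (by fun_prop) (exp (|t| * B)) (Filter.Eventually.of_forall fun x => ?_)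
    rw [Real.norm_eq_abs, abs_exp, exp_le_exp]
    calc t * g x ≤ |t * g x| := le_abs_self _
      _ = |t| * |g x| := abs_mul _ _
      _ ≤ |t| * B := by gcongr; exact hgB x
  -- Fenchel–Young with `a = t g - t² B² / 2`, integrated against `Q`.
  have key : ∀ t : ℝ, t * ∫ x, g x ∂P ≤ klDivR P Q + t ^ 2 * B ^ 2 / 2 := fun t => by
    set c := t ^ 2 * B ^ 2 / 2 with hc
    have h : ∫ x, (t * (p x * g x) - c * p x) ∂Q
        ≤ ∫ x, (p x * log (p x) - p x + exp (-c) * exp (t * g x)) ∂Q := by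
      refine integral_mono ((hpg.const_mul t).sub (hpint.const_mul c))
        (hdiff.add ((hexp t).const_mul _)) fun x => ?_
      have := mul_le_mul_log_sub_add_exp (hp0 x) (-c + t * g x)
      rw [exp_add] at this
      dsimp only
      linarith
    rw [integral_sub (hpg.const_mul t) (hpint.const_mul c),
      integral_add hdiff ((hexp t).const_mul _), integral_sub hplog hpint,
      integral_const_mul, integral_const_mul, integral_const_mul, hp1, hKL, hgP] at h
    have h2 : exp (-c) * ∫ x, exp (t * g x) ∂Q ≤ 1 := by
      calc exp (-c) * ∫ x, exp (t * g x) ∂Q ≤ exp (-c) * exp c := by gcongr; exact hmgf t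
        _ = 1 := by rw [← exp_add]; simp
    linarith
  -- The optimal parameter is `t = E_P[g] / B²`.
  set E := ∫ x, g x ∂P
  have h := key (E / B ^ 2)
  have hE : E ^ 2 ≤ B ^ 2 * (2 * klDivR P Q) := by
    have e1 : E / B ^ 2 * E = E ^ 2 / B ^ 2 := by ring
    have e2 : (E / B ^ 2) ^ 2 * B ^ 2 / 2 = E ^ 2 / B ^ 2 / 2 := by field_simp
    rw [e1, e2] at h
    have h' : E ^ 2 / B ^ 2 ≤ 2 * klDivR P Q := by linarith
    rw [div_le_iff₀ (by positivity)] at h'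
    linarith
  calc |E| ≤ sqrt (B ^ 2 * (2 * klDivR P Q)) := abs_le_sqrt hE
    _ = B * sqrt (2 * klDivR P Q) := by rw [sqrt_mul (by positivity), sqrt_sq hB.le]

/-- The joint law of a variable and a fair coin is at most twice the product of the marginals. -/
lemma map_prod_le_two_smul {Ω α : Type*} [MeasurableSpace Ω] [MeasurableSpace α]
    (ν : Measure Ω) [IsProbabilityMeasure ν] (L : Ω → α) (V : Ω → Bool)
    (hL : Measurable L) (hV : Measurable V) (hhalf : ∀ b, ν (V ⁻¹' {b}) = 2⁻¹) :
    ν.map (fun ω => (L ω, V ω)) ≤ (2 : ℝ≥0∞) • (ν.map L).prod (ν.map V) := by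
  refine Measure.le_intro fun A hA _ => ?_
  have : IsProbabilityMeasure (ν.map L) := Measure.isProbabilityMeasure_map hL.aemeasurable
  have : IsProbabilityMeasure (ν.map V) := Measure.isProbabilityMeasure_map hV.aemeasurable
  have hs : ∀ b : Bool, MeasurableSet ((fun l : α => (l, b)) ⁻¹' A) :=
    fun b => (measurable_id.prodMk measurable_const) hA
  have hc : ∀ b : Bool, ν.map V {b} = 2⁻¹ := fun b => by
    rw [Measure.map_apply hV (measurableSet_singleton b), hhalf]
  rw [Measure.map_apply (hL.prodMk hV) hA, Measure.smul_apply, Measure.prod_apply_symm hA,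
    lintegral_fintype]
  simp only [hc, Fintype.sum_bool, smul_eq_mul]
  rw [← add_mul, mul_left_comm, ENNReal.mul_inv_cancel (by simp) (by simp), mul_one,
    Measure.map_apply hL (hs true), Measure.map_apply hL (hs false)]
  refine (measure_mono ?_).trans (measure_union_le _ _)
  intro ω hω
  simp only [Set.mem_preimage, Set.mem_union] at hω ⊢
  cases h : V ω <;> simp_all

/-- The difference of the two coordinates, with the sign given by the coin. -/
def signedDiff (q : (ℝ × ℝ) × Bool) : ℝ := if q.2 then q.1.1 - q.1.2 else q.1.2 - q.1.1

lemma measurable_signedDiff : Measurable signedDiff := by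
  unfold signedDiff
  refine Measurable.ite (measurable_snd (measurableSet_singleton true)) ?_ ?_ <;> fun_prop

/-- Truncation of `signedDiff` to `[-B, B]`, agreeing with it on pairs in `[0, B]²`. -/
def clippedDiff (B : ℝ) (q : (ℝ × ℝ) × Bool) : ℝ := max (-B) (min B (signedDiff q))

lemma measurable_clippedDiff (B : ℝ) : Measurable (clippedDiff B) :=
  measurable_const.max (measurable_const.min measurable_signedDiff)

lemma abs_clippedDiff_le {B : ℝ} (hB : 0 < B) (q : (ℝ × ℝ) × Bool) : |clippedDiff B q| ≤ B :=
  abs_le.2 ⟨le_max_left _ _, max_le (by linarith) (min_le_left _ _)⟩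

lemma clippedDiff_false {B : ℝ} (hB : 0 < B) (l : ℝ × ℝ) :
    clippedDiff B (l, false) = -clippedDiff B (l, true) := by
  simp only [clippedDiff, signedDiff, Bool.false_eq_true, if_false, if_true]
  grind

/-- Under a product law with a fair coin, the clipped signed difference is sub-Gaussian: averaging
the coin out leaves a hyperbolic cosine. -/
lemma integral_exp_prod_le (ρ : Measure (ℝ × ℝ)) [IsProbabilityMeasure ρ] (κ : Measure Bool)
    [IsProbabilityMeasure κ] (hκ : ∀ b, κ {b} = 2⁻¹) {B : ℝ} (hB : 0 < B) (t : ℝ) :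
    ∫ q, exp (t * clippedDiff B q) ∂(ρ.prod κ) ≤ exp (t ^ 2 * B ^ 2 / 2) := by
  have hm := measurable_clippedDiff B
  have hint : Integrable (fun q => exp (t * clippedDiff B q)) (ρ.prod κ) := by
    refine Integrable.of_bound (by fun_prop) (exp (|t| * B)) (Filter.Eventually.of_forall fun x => ?_)
    rw [Real.norm_eq_abs, abs_exp, exp_le_exp]
    calc t * clippedDiff B x ≤ |t * clippedDiff B x| := le_abs_self _
      _ = |t| * |clippedDiff B x| := abs_mul _ _
      _ ≤ |t| * B := by gcongr; exact abs_clippedDiff_le hB x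
  have hreal : ∀ b, κ.real {b} = 2⁻¹ := fun b => by simp [Measure.real, hκ]
  rw [integral_prod _ hint]
  have hcosh : ∀ l : ℝ × ℝ, ∫ b, exp (t * clippedDiff B (l, b)) ∂κ
      = cosh (t * clippedDiff B (l, true)) := fun l => by
    rw [integral_fintype Integrable.of_finite]
    simp only [hreal, Fintype.sum_bool, smul_eq_mul, clippedDiff_false hB, cosh_eq, mul_neg]
    ring
  simp only [hcosh]
  have hbd : ∀ l : ℝ × ℝ, cosh (t * clippedDiff B (l, true)) ≤ exp (t ^ 2 * B ^ 2 / 2) := fun l => by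
    refine (cosh_le_exp_half_sq _).trans (exp_le_exp.2 ?_)
    have h := sq_le_sq' (abs_le.1 (abs_clippedDiff_le hB (l, true))).1
      (abs_le.1 (abs_clippedDiff_le hB (l, true))).2
    rw [mul_pow]
    gcongr
  calc ∫ l, cosh (t * clippedDiff B (l, true)) ∂ρ
      ≤ ∫ _, exp (t ^ 2 * B ^ 2 / 2) ∂ρ :=
        integral_mono_of_nonneg (Filter.Eventually.of_forall fun l => (cosh_pos _).le)
          (integrable_const _) (Filter.Eventually.of_forall hbd)
    _ = exp (t ^ 2 * B ^ 2 / 2) := by simp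

/-- The conditional form of the bound, for a single pair of losses and its fair coin. -/
lemma abs_integral_signedDiff_le {Ω : Type*} [MeasurableSpace Ω] (ν : Measure Ω)
    [IsProbabilityMeasure ν] (L : Ω → ℝ × ℝ) (V : Ω → Bool) (hL : Measurable L)
    (hV : Measurable V) (hhalf : ∀ b, ν (V ⁻¹' {b}) = 2⁻¹) {B : ℝ} (hB : 0 < B)
    (h1 : ∀ ω, 0 ≤ (L ω).1 ∧ (L ω).1 ≤ B) (h2 : ∀ ω, 0 ≤ (L ω).2 ∧ (L ω).2 ≤ B) :
    |∫ ω, signedDiff (L ω, V ω) ∂ν| ≤ B * sqrt (2 * klDivR (ν.map (fun ω => (L ω, V ω)))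
      ((ν.map L).prod (ν.map V))) := by
  have : IsProbabilityMeasure (ν.map L) := Measure.isProbabilityMeasure_map hL.aemeasurable
  have : IsProbabilityMeasure (ν.map V) := Measure.isProbabilityMeasure_map hV.aemeasurable
  have : IsProbabilityMeasure (ν.map (fun ω => (L ω, V ω))) :=
    Measure.isProbabilityMeasure_map (hL.prodMk hV).aemeasurable
  have hc : ∀ b : Bool, ν.map V {b} = 2⁻¹ := fun b => by
    rw [Measure.map_apply hV (measurableSet_singleton b), hhalf]
  have h := abs_integral_le_of_subgaussian _ _ (map_prod_le_two_smul ν L V hL hV hhalf)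
    (clippedDiff B) (measurable_clippedDiff B) B hB (abs_clippedDiff_le hB)
    (integral_exp_prod_le (ν.map L) (ν.map V) hc hB)
  rw [integral_map (hL.prodMk hV).aemeasurable
    (measurable_clippedDiff B).aestronglyMeasurable] at h
  convert h using 5 with ω
  have := h1 ω
  have := h2 ω
  simp only [clippedDiff, signedDiff]
  grind

/-- Law of total expectation over a finitely valued random variable. -/
lemma integral_eq_sum_cond {Ω β : Type*} [MeasurableSpace Ω] [MeasurableSpace β] [Fintype β]
    [MeasurableSingletonClass β] (μ : Measure Ω) [IsProbabilityMeasure μ] (Z : Ω → β)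
    (hZ : Measurable Z) (F : Ω → ℝ) (hF : Integrable F μ) :
    ∫ ω, F ω ∂μ = ∑ z, μ.real (Z ⁻¹' {z}) * ∫ ω, F ω ∂(μ[|Z ⁻¹' {z}]) := by
  have hint : ∀ z, Integrable F (μ (Z ⁻¹' {z}) • μ[|Z ⁻¹' {z}]) := fun z => by
    by_cases h0 : μ (Z ⁻¹' {z}) = 0
    · simp [h0]
    · refine Integrable.smul_measure ?_ (measure_ne_top _ _)
      exact hF.restrict.smul_measure (ENNReal.inv_ne_top.2 h0)
  conv_lhs => rw [← sum_meas_smul_cond_fiber hZ μ]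
  rw [integral_finsetSum_measure fun z _ => hint z]
  simp [integral_smul_measure, Measure.real]

/-- Each coordinate of a uniform element of `{0,1}^m` is a fair coin. -/
lemma measure_coord_eq_half {Ω : Type*} [MeasurableSpace Ω] (μ : Measure Ω)
    [IsProbabilityMeasure μ] {m : ℕ} (U : Ω → (Fin m → Bool)) (hUm : Measurable U)
    (hU : ∀ v : Fin m → Bool, μ (U ⁻¹' {v}) = ((2 ^ m : ℕ) : ℝ≥0∞)⁻¹) (i : Fin m) (b : Bool) :
    μ (U ⁻¹' {v | v i = b}) = 2⁻¹ := by
  -- Flipping the `i`-th bit exchanges the two events, and the law of `U` is constant on points.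
  have hsum : ∀ c : Bool, μ (U ⁻¹' {v | v i = c})
      = ∑ v : Fin m → Bool, if v i = c then ((2 ^ m : ℕ) : ℝ≥0∞)⁻¹ else 0 := fun c => by
    classical
    have hset : U ⁻¹' {v | v i = c}
        = U ⁻¹' ((Finset.univ.filter fun v : Fin m → Bool => v i = c : Finset _) : Set _) := by
      ext; simp
    rw [hset, ← sum_measure_preimage_singleton _ fun v _ => hUm (measurableSet_singleton v),
      Finset.sum_filter]
    simp [hU]
  have hflip : μ (U ⁻¹' {v | v i = !b}) = μ (U ⁻¹' {v | v i = b}) := by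
    rw [hsum, hsum]
    have hinv : Function.Involutive
        (fun v : Fin m → Bool => Function.update v i (!(v i))) := fun v => by
      ext j; by_cases h : j = i
      · subst h; simp
      · simp [h]
    refine Fintype.sum_equiv hinv.toPerm _ _ fun v => ?_
    cases h : v i <;> cases b <;> simp [h]
  have hcompl : U ⁻¹' {v | v i = !b} = (U ⁻¹' {v | v i = b})ᶜ := by
    ext ω; cases b <;> simp
  have htot := measure_add_measure_compl (μ := μ)
    (hUm (Set.toFinite {v : Fin m → Bool | v i = b}).measurableSet)
  rw [← hcompl, hflip, measure_univ, ← two_mul] at htot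
  exact ENNReal.eq_inv_of_mul_eq_one_left (by rw [mul_comm]; exact htot)

theorem statement10 {Ω X Y 𝒲 : Type*} [MeasurableSpace Ω] [MeasurableSpace X]
    [MeasurableSpace Y] [MeasurableSpace 𝒲]
    (m K : ℕ) (hm : 1 ≤ m)
    (s : Fin (2 * m) → X × Y) (B : ℝ) (hB : 0 < B)
    -- the model prediction map and the criterion
    (f : 𝒲 → X → (Fin K → ℝ)) (hfmeas : Measurable fun p : 𝒲 × X => f p.1 p.2)
    (r : (Fin K → ℝ) → Y → ℝ) (hrmeas : Measurable fun p : (Fin K → ℝ) × Y => r p.1 p.2)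
    (hr : ∀ (yh : Fin K → ℝ) (y : Y), 0 ≤ r yh y ∧ r yh y ≤ B)
    (μ : Measure Ω) [IsProbabilityMeasure μ]
    (W : Ω → 𝒲) (Zt : Ω → (Fin m → Fin (2 * m) × Fin (2 * m))) (U : Ω → (Fin m → Bool))
    (hWm : Measurable W) (hZtm : Measurable Zt) (hUm : Measurable U)
    -- Z̃ is uniformly distributed on the set of transductive supersamples
    (hZt : ∀ zt, μ (Zt ⁻¹' {zt}) =
      if IsSupersample m zt
        then ((Finset.univ.filter (IsSupersample m)).card : ℝ≥0∞)⁻¹ else 0)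
    -- U is uniformly distributed on {0,1}^m
    (hU : ∀ v : Fin m → Bool, μ (U ⁻¹' {v}) = ((2 ^ m : ℕ) : ℝ≥0∞)⁻¹)
    -- Z̃ and U are independent
    (hIndep : IndepFun Zt U μ) :
    |∫ ω, (RtestSS m s (fun w p => r (f w p.1) p.2) (W ω) (Zt ω) (U ω)
        - RtrainSS m s (fun w p => r (f w p.1) p.2) (W ω) (Zt ω) (U ω)) ∂μ|
      ≤ (B / m) * ∑ i : Fin m, ∫ ω, Real.sqrt (2 *
          condMI μ
            (fun ω' => (r (f (W ω') (s ((Zt ω' i).1)).1) (s ((Zt ω' i).1)).2,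
                        r (f (W ω') (s ((Zt ω' i).2)).1) (s ((Zt ω' i).2)).2))
            (fun ω' => U ω' i) (Zt ⁻¹' {Zt ω})) ∂μ := by
  set a : Fin m → Ω → ℝ := fun i ω => r (f (W ω) (s ((Zt ω i).1)).1) (s ((Zt ω i).1)).2 with ha
  set b : Fin m → Ω → ℝ := fun i ω => r (f (W ω) (s ((Zt ω i).2)).1) (s ((Zt ω i).2)).2 with hb
  have hloss : ∀ k : (Fin m → Fin (2 * m) × Fin (2 * m)) → Fin (2 * m),
      Measurable fun ω => r (f (W ω) (s (k (Zt ω))).1) (s (k (Zt ω))).2 := fun k => by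
    have h1 : Measurable fun ω => s (k (Zt ω)) :=
      (measurable_of_finite fun z => s (k z)).comp hZtm
    exact hrmeas.comp ((hfmeas.comp (hWm.prodMk h1.fst)).prodMk h1.snd)
  have hL : ∀ i, Measurable fun ω => (a i ω, b i ω) := fun i =>
    (hloss fun z => (z i).1).prodMk (hloss fun z => (z i).2)
  have hV : ∀ i, Measurable fun ω => U ω i := fun i => (measurable_pi_apply i).comp hUm
  have ha0 : ∀ i ω, 0 ≤ a i ω ∧ a i ω ≤ B := fun i ω => hr _ _
  have hb0 : ∀ i ω, 0 ≤ b i ω ∧ b i ω ≤ B := fun i ω => hr _ _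
  set g : Fin m → Ω → ℝ := fun i ω => signedDiff ((a i ω, b i ω), U ω i) with hg
  have hgint : ∀ i, Integrable (g i) μ := fun i => by
    refine Integrable.of_bound
      (measurable_signedDiff.comp ((hL i).prodMk (hV i))).aestronglyMeasurable B
      (Filter.Eventually.of_forall fun ω => ?_)
    have h1 := ha0 i ω
    have h2 := hb0 i ω
    rw [Real.norm_eq_abs, abs_le]
    simp only [hg, signedDiff]
    split_ifs <;> constructor <;> linarith
  have hdecomp : ∀ ω, RtestSS m s (fun w p => r (f w p.1) p.2) (W ω) (Zt ω) (U ω)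
        - RtrainSS m s (fun w p => r (f w p.1) p.2) (W ω) (Zt ω) (U ω)
      = (∑ i, g i ω) / m := fun ω => by
    rw [RtestSS, RtrainSS, ← sub_div, ← Finset.sum_sub_distrib]
    congr 1
    refine Finset.sum_congr rfl fun i _ => ?_
    simp only [hg, ha, hb, signedDiff]
    cases U ω i <;> simp
  -- The disintegrated information as a function of the realization of the supersample.
  set I : Fin m → (Fin m → Fin (2 * m) × Fin (2 * m)) → ℝ := fun i z =>
    condMI μ (fun ω => (a i ω, b i ω)) (fun ω => U ω i) (Zt ⁻¹' {z}) with hI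
  have hcond : ∀ i z, μ.real (Zt ⁻¹' {z}) * |∫ ω, g i ω ∂(μ[|Zt ⁻¹' {z}])|
      ≤ μ.real (Zt ⁻¹' {z}) * (B * sqrt (2 * I i z)) := fun i z => by
    by_cases h0 : μ (Zt ⁻¹' {z}) = 0
    · simp [Measure.real, h0]
    have : IsProbabilityMeasure (μ[|Zt ⁻¹' {z}]) := cond_isProbabilityMeasure h0
    refine mul_le_mul_of_nonneg_left ?_ measureReal_nonneg
    refine abs_integral_signedDiff_le _ (fun ω => (a i ω, b i ω)) (fun ω => U ω i) (hL i) (hV i)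
      (fun c => ?_) hB (ha0 i) (hb0 i)
    have hset : (fun ω => U ω i) ⁻¹' {c} = U ⁻¹' {v | v i = c} := rfl
    rw [cond_apply (hZtm (measurableSet_singleton z)), hset,
      hIndep.measure_inter_preimage_eq_mul _ _ (measurableSet_singleton z)
        (Set.toFinite {v : Fin m → Bool | v i = c}).measurableSet,
      ← mul_assoc, ENNReal.inv_mul_cancel h0 (measure_ne_top _ _), one_mul,
      measure_coord_eq_half μ U hUm hU]
  have hi : ∀ i, |∫ ω, g i ω ∂μ| ≤ B * ∫ ω, sqrt (2 * I i (Zt ω)) ∂μ := fun i => by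
    have hR : ∫ ω, sqrt (2 * I i (Zt ω)) ∂μ
        = ∑ z, μ.real (Zt ⁻¹' {z}) * sqrt (2 * I i z) := by
      rw [← integral_map (φ := Zt) (f := fun z => sqrt (2 * I i z)) hZtm.aemeasurable
        (measurable_of_finite _).aestronglyMeasurable]
      have : IsProbabilityMeasure (μ.map Zt) := Measure.isProbabilityMeasure_map hZtm.aemeasurable
      rw [integral_fintype Integrable.of_finite]
      refine Finset.sum_congr rfl fun z _ => ?_
      rw [map_measureReal_apply hZtm (measurableSet_singleton z), smul_eq_mul]
    rw [integral_eq_sum_cond μ Zt hZtm (g i) (hgint i), hR, Finset.mul_sum]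
    refine (Finset.abs_sum_le_sum_abs _ _).trans (Finset.sum_le_sum fun z _ => ?_)
    rw [abs_mul, abs_of_nonneg measureReal_nonneg]
    exact (hcond i z).trans_eq (by ring)
  have hm0 : (0 : ℝ) < m := by exact_mod_cast hm
  simp only [hdecomp]
  rw [integral_div, integral_finsetSum _ fun i _ => hgint i, abs_div, abs_of_pos hm0,
    div_mul_eq_mul_div, div_le_div_iff_of_pos_right hm0, Finset.mul_sum]
  exact (Finset.abs_sum_le_sum_abs _ _).trans (Finset.sum_le_sum fun i _ => hi i)

end
end

section
/- Suppose 0 ≤ ℓ(w, s i) ≤ B for all w ∈ 𝒲 and all i. Let P be a probability measure on 𝒲 (a prior independent of Z), and let Q be a Markov kernel assigning to each permutation z a probability measure Q(z) on 𝒲 with Q(z) ≪ P. Let (Z,W) have the joint law in which Z is a uniform random permutation and W given Z = z has law Q(z). Then for every λ > 0 and 0 < δ < 1, with probability at least 1 − δ under the joint law of (Z,W): R_test(W,Z) ≤ R_train(W,Z) + λ·B²·C_{m,u}·(m+u)/(8·m·u) + (1/λ)·( log( (dQ(Z)/dP)(W) ) + log(1/δ) ), where dQ(z)/dP denotes the Radon–Nikodym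 derivative. -/
/-!
The proof is a change of measure together with a bound on the moment generating function of
`Rtest - Rtrain` for a fixed parameter `w`.

For fixed `w` both errors are affine functions of the sum of the losses over the first `m` (or over
the last `u`) entries of a uniform random permutation. Revealing these entries one at a time gives a
martingale; the entry revealed first out of `m + u + 1` moves the conditional expectation of a sum
of `m + 1` entries by at most `u B / (m + u)`, so Hoeffding's lemma and induction (`perm_mgf_le`)
give a sub-Gaussian bound with variance factor `B² / 4` times the sum of `u² / j²` over
`u ≤ j < m + u`. The estimate `1 / j² ≤ 1 / (j - 1/2) - 1 / (j + 1/2)` telescopes to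
the factor in `Cmu`. Revealing the training entries if `m ≤ u`, and the test entries otherwise,
produces `max m u` (`gap_mgf_le`).

On the event that the bound fails, `dQ(z)/dP` is at most `δ exp (lam (Rtest - Rtrain - K))`,
where `K` is the middle term of the bound. The `Q z`-measure of the event is the `P`-integral of
`dQ(z)/dP` over it (`posterior_bad_le`); averaging over `z`, exchanging this average with the
`P`-integral and applying the moment generating function bound shows that the event has
probability at most `δ`.
-/

open MeasureTheory ProbabilityTheory Real

noncomputable section

/-- Hoeffding's lemma for a uniformly chosen entry of a finite family in `[0, B]`. -/
theorem hoeffding_uniform (k : ℕ) (a : Fin (k + 1) → ℝ) (B : ℝ)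
    (ha : ∀ i, 0 ≤ a i ∧ a i ≤ B) (t : ℝ) :
    ∑ p, exp (t * a p)
      ≤ ((k : ℝ) + 1) * exp (t * ((∑ p, a p) / ((k : ℝ) + 1)) + t ^ 2 * B ^ 2 / 8) := by
  set μ : Measure (Fin (k + 1)) := (PMF.uniformOfFintype (Fin (k + 1))).toMeasure with hμ
  have hk : (0 : ℝ) < (k : ℝ) + 1 := by positivity
  have hint : ∀ f : Fin (k + 1) → ℝ, ∫ x, f x ∂μ = (∑ p, f p) / ((k : ℝ) + 1) := by
    intro f
    rw [hμ, PMF.integral_eq_sum]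
    simp only [PMF.uniformOfFintype_apply, Fintype.card_fin, smul_eq_mul]
    rw [← Finset.mul_sum, div_eq_inv_mul]
    congr 1
    rw [ENNReal.toReal_inv, ENNReal.toReal_natCast]
    push_cast
    rfl
  have hsub := (hasSubgaussianMGF_of_mem_Icc (μ := μ) (X := a) (a := 0) (b := B)
    (Measurable.of_discrete).aemeasurable (Filter.Eventually.of_forall fun i => ha i)).mgf_le t
  rw [mgf, hint, hint] at hsub
  have hc : ((((‖B - 0‖₊ / 2) ^ 2 : NNReal) : ℝ)) * t ^ 2 / 2 = t ^ 2 * B ^ 2 / 8 := by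
    push_cast
    rw [sub_zero, Real.norm_eq_abs, div_pow, sq_abs]
    ring
  rw [hc, div_le_iff₀ hk] at hsub
  set A := (∑ p, a p) / ((k : ℝ) + 1)
  have h1 : ∑ p, exp (t * a p) = exp (t * A) * ∑ p, exp (t * (a p - A)) := by
    rw [Finset.mul_sum]
    refine Finset.sum_congr rfl fun p _ => ?_
    rw [← exp_add]
    congr 1
    ring
  rw [h1, exp_add]
  calc exp (t * A) * ∑ p, exp (t * (a p - A))
      ≤ exp (t * A) * (exp (t ^ 2 * B ^ 2 / 8) * ((k : ℝ) + 1)) := by gcongr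
    _ = _ := by ring

/-- Moment generating function bound for the sum of the first `m` out of `n = m + u` entries sampled
without replacement. The induction conditions on the first entry, through the decomposition
of a permutation of `Fin (n + 1)` into the image of `0` and a permutation of `Fin n`. -/
theorem perm_mgf_le (u : ℕ) (hu : 1 ≤ u) (B t : ℝ) (m : ℕ) :
    ∀ (n : ℕ), n = m + u → ∀ a : Fin n → ℝ, (∀ i, 0 ≤ a i ∧ a i ≤ B) →
    ∑ σ : Equiv.Perm (Fin n), exp (t * ∑ i : Fin n, if (i : ℕ) < m then a (σ i) else 0)
      ≤ (n.factorial : ℝ) * exp (t * (m * (∑ i, a i) / n)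
          + t ^ 2 * B ^ 2 / 8 * ((u : ℝ) ^ 2 * m / (((u : ℝ) - 1 / 2) * ((n : ℝ) - 1 / 2)))) := by
  induction m with
  | zero =>
    intro n hn a ha
    simp [Fintype.card_perm]
  | succ m ih =>
    intro n' hn' a ha
    obtain ⟨n, rfl⟩ : ∃ n, n' = n + 1 := ⟨m + u, by omega⟩
    have hn : n = m + u := by omega
    have huR : (1 : ℝ) ≤ u := by exact_mod_cast hu
    have hnR : (n : ℝ) = m + u := by exact_mod_cast hn
    have hmR : (0 : ℝ) ≤ m := by positivity
    have hn0 : (0 : ℝ) < n := by linarith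
    set T := ∑ i, a i with hT
    set V := (u : ℝ) ^ 2 * m / (((u : ℝ) - 1 / 2) * ((n : ℝ) - 1 / 2)) with hV
    have hsplit : ∑ σ : Equiv.Perm (Fin (n + 1)),
          exp (t * ∑ i : Fin (n + 1), if (i : ℕ) < m + 1 then a (σ i) else 0)
        = ∑ p : Fin (n + 1), exp (t * a p) * ∑ e : Equiv.Perm (Fin n),
          exp (t * ∑ i : Fin n, if (i : ℕ) < m then a (Equiv.swap 0 p (e i).succ) else 0) := by
      rw [← Equiv.sum_comp Equiv.Perm.decomposeFin.symm, Fintype.sum_prod_type]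
      refine Finset.sum_congr rfl fun p _ => ?_
      rw [Finset.mul_sum]
      refine Finset.sum_congr rfl fun e _ => ?_
      rw [← exp_add, Fin.sum_univ_succ, ← mul_add]
      simp [Equiv.Perm.decomposeFin_symm_apply_succ]
    have hrest : ∀ p : Fin (n + 1), ∑ j : Fin n, a (Equiv.swap 0 p j.succ) = T - a p := by
      intro p
      have h := Equiv.sum_comp (Equiv.swap 0 p) a
      rw [Fin.sum_univ_succ, Equiv.swap_apply_left] at h
      linarith
    have hinner : ∀ p : Fin (n + 1), ∑ e : Equiv.Perm (Fin n),
          exp (t * ∑ i : Fin n, if (i : ℕ) < m then a (Equiv.swap 0 p (e i).succ) else 0)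
        ≤ (n.factorial : ℝ) * exp (t * (m * (T - a p) / n) + t ^ 2 * B ^ 2 / 8 * V) := by
      intro p
      have h := ih n hn (fun j => a (Equiv.swap 0 p j.succ)) (fun j => ha _)
      rwa [hrest p] at h
    have hH := hoeffding_uniform n a B ha (t * (u / n))
    have hVstep : V + (u : ℝ) ^ 2 / n ^ 2
        ≤ (u : ℝ) ^ 2 * ((m + 1 : ℕ) : ℝ)
          / (((u : ℝ) - 1 / 2) * (((n + 1 : ℕ) : ℝ) - 1 / 2)) := by
      have e1 : (u : ℝ) ^ 2 * ((m + 1 : ℕ) : ℝ)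
          / (((u : ℝ) - 1 / 2) * (((n + 1 : ℕ) : ℝ) - 1 / 2)) - V
          = (u : ℝ) ^ 2 / (n ^ 2 - 1 / 4) := by
        have h1 : (u : ℝ) - 1 / 2 ≠ 0 := by linarith
        have h2 : (n : ℝ) - 1 / 2 ≠ 0 := by linarith
        have h3 : (n : ℝ) + 1 - 1 / 2 ≠ 0 := by linarith
        have h4 : (n : ℝ) ^ 2 - 1 / 4 = (n - 1 / 2) * (n + 1 - 1 / 2) := by ring
        rw [hV, h4]
        push_cast
        rw [div_sub_div _ _ (mul_ne_zero h1 h3) (mul_ne_zero h1 h2),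
          div_eq_div_iff (by positivity) (by positivity), hnR]
        ring
      have e2 : (u : ℝ) ^ 2 / n ^ 2 ≤ (u : ℝ) ^ 2 / (n ^ 2 - 1 / 4) := by
        apply div_le_div_of_nonneg_left (by positivity) (by nlinarith) (by linarith)
      linarith
    rw [hsplit]
    calc _ ≤ ∑ p : Fin (n + 1), exp (t * a p) *
            ((n.factorial : ℝ) * exp (t * (m * (T - a p) / n) + t ^ 2 * B ^ 2 / 8 * V)) := by
          gcongr with p _
          exact hinner p
      _ = (n.factorial : ℝ) * exp (t * (m * T / n) + t ^ 2 * B ^ 2 / 8 * V)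
            * ∑ p, exp (t * (u / n) * a p) := by
          rw [Finset.mul_sum]
          refine Finset.sum_congr rfl fun p _ => ?_
          rw [mul_left_comm, ← exp_add, mul_assoc, ← exp_add]
          congr 2
          have hu' : (u : ℝ) = n - m := by linarith
          rw [hu']
          field_simp
          ring
      _ ≤ (n.factorial : ℝ) * exp (t * (m * T / n) + t ^ 2 * B ^ 2 / 8 * V)
            * (((n : ℝ) + 1) * exp (t * (u / n) * (T / ((n : ℝ) + 1))
              + (t * (u / n)) ^ 2 * B ^ 2 / 8)) := by gcongr
      _ = ((n + 1).factorial : ℝ) * exp (t * (((m + 1 : ℕ) : ℝ) * T / ((n + 1 : ℕ) : ℝ))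
            + t ^ 2 * B ^ 2 / 8 * (V + (u : ℝ) ^ 2 / n ^ 2)) := by
          rw [Nat.factorial_succ]
          push_cast
          rw [mul_mul_mul_comm, ← exp_add, mul_comm (n.factorial : ℝ)]
          congr 2
          have hm' : (m : ℝ) = n - u := by linarith
          rw [hm']
          field_simp
          ring
      _ ≤ _ := by gcongr

/-- For a fixed parameter, the gap between test and training error under uniform splitting is
sub-Gaussian with the variance factor of the theorem. -/
theorem gap_mgf_le {S W : Type*} (m u : ℕ) (hm : 1 ≤ m) (hu : 1 ≤ u) (s : Fin (m + u) → S)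
    (B : ℝ) (ℓ : W → S → ℝ) (w : W)
    (hℓ : ∀ i : Fin (m + u), 0 ≤ ℓ w (s i) ∧ ℓ w (s i) ≤ B) (lam : ℝ) :
    ∑ σ : Equiv.Perm (Fin (m + u)), exp (lam * (Rtest m u s ℓ w σ - Rtrain m u s ℓ w σ))
      ≤ ((m + u).factorial : ℝ)
        * exp (lam * (lam * B ^ 2 * Cmu m u * ((m : ℝ) + u) / (8 * m * u))) := by
  have hmR : (1 : ℝ) ≤ m := by exact_mod_cast hm
  have huR : (1 : ℝ) ≤ u := by exact_mod_cast hu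
  set a : Fin (m + u) → ℝ := fun i => ℓ w (s i) with ha
  set T := ∑ i, a i with hT
  have hsum : ∀ σ : Equiv.Perm (Fin (m + u)),
      (∑ i : Fin (m + u), if (i : ℕ) < m then a (σ i) else 0)
        + (∑ i : Fin (m + u), if m ≤ (i : ℕ) then a (σ i) else 0) = T := by
    intro σ
    rw [← Finset.sum_add_distrib, hT, ← Equiv.sum_comp σ a]
    refine Finset.sum_congr rfl fun i _ => ?_
    by_cases h : (i : ℕ) < m
    · simp [h, Nat.not_le.mpr h]
    · simp [h, Nat.not_lt.mp h]
  rcases le_total m u with hmu | hmu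
  · -- The training entries are revealed: the gap is `T / u - (m + u) / (m u) * (training sum)`.
    have h := perm_mgf_le u hu B (-(lam * (((m : ℝ) + u) / (m * u)))) m (m + u) rfl a hℓ
    have hgap : ∀ σ : Equiv.Perm (Fin (m + u)),
        lam * (Rtest m u s ℓ w σ - Rtrain m u s ℓ w σ)
          = lam * (T / u) + -(lam * (((m : ℝ) + u) / (m * u)))
            * ∑ i : Fin (m + u), if (i : ℕ) < m then a (σ i) else 0 := by
      intro σ
      rw [← hsum σ, Rtest, Rtrain]
      simp only [ha]
      field_simp
      ring
    simp_rw [hgap, exp_add]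
    rw [← Finset.mul_sum]
    refine (mul_le_mul_of_nonneg_left h (exp_pos _).le).trans (le_of_eq ?_)
    rw [mul_left_comm, ← exp_add]
    congr 2
    have hmax : max (m : ℝ) u = u := max_eq_right (by exact_mod_cast hmu)
    have h1 : (u : ℝ) * 2 - 1 ≠ 0 := by linarith
    have h2 : ((m : ℝ) + u) * 2 - 1 ≠ 0 := by linarith
    have h3 : (2 : ℝ) * u - 1 ≠ 0 := by linarith
    have h4 : (2 : ℝ) * (m + u) - 1 ≠ 0 := by linarith
    rw [Cmu, hmax, ← hT]
    push_cast
    field_simp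
    ring
  · -- The test entries are revealed, after reversing the order of the sampling sequence.
    have h := perm_mgf_le m hm B (lam * (((m : ℝ) + u) / (m * u))) u (m + u) (add_comm m u) a hℓ
    rw [← Equiv.sum_comp (Equiv.mulRight (Fin.revPerm : Equiv.Perm (Fin (m + u))))] at h
    have hrev : ∀ σ : Equiv.Perm (Fin (m + u)),
        (∑ i : Fin (m + u), if (i : ℕ) < u
            then a ((Equiv.mulRight (Fin.revPerm : Equiv.Perm (Fin (m + u)))) σ i) else 0)
          = ∑ i : Fin (m + u), if m ≤ (i : ℕ) then a (σ i) else 0 := by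
      intro σ
      rw [← Equiv.sum_comp (Fin.revPerm : Equiv.Perm (Fin (m + u)))]
      refine Finset.sum_congr rfl fun i _ => ?_
      have hi : ((Fin.rev i : Fin (m + u)) : ℕ) < u ↔ m ≤ (i : ℕ) := by
        rw [Fin.val_rev]
        omega
      simp only [Equiv.coe_mulRight, Equiv.Perm.mul_apply, Fin.revPerm_apply, Fin.rev_rev, hi]
    simp_rw [hrev] at h
    have hgap : ∀ σ : Equiv.Perm (Fin (m + u)),
        lam * (Rtest m u s ℓ w σ - Rtrain m u s ℓ w σ)
          = -(lam * (T / m)) + (lam * (((m : ℝ) + u) / (m * u)))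
            * ∑ i : Fin (m + u), if m ≤ (i : ℕ) then a (σ i) else 0 := by
      intro σ
      rw [← hsum σ, Rtest, Rtrain]
      simp only [ha]
      field_simp
      ring
    simp_rw [hgap, exp_add]
    rw [← Finset.mul_sum]
    refine (mul_le_mul_of_nonneg_left h (exp_pos _).le).trans (le_of_eq ?_)
    rw [mul_left_comm, ← exp_add]
    congr 2
    have hmax : max (m : ℝ) u = m := max_eq_left (by exact_mod_cast hmu)
    have h1 : (m : ℝ) * 2 - 1 ≠ 0 := by linarith
    have h2 : ((m : ℝ) + u) * 2 - 1 ≠ 0 := by linarith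
    have h3 : (2 : ℝ) * m - 1 ≠ 0 := by linarith
    have h4 : (2 : ℝ) * (m + u) - 1 ≠ 0 := by linarith
    rw [Cmu, hmax, ← hT]
    push_cast
    field_simp
    ring

/-- Change of measure: the posterior mass of the event that `g` exceeds the log-density plus
`log (1 / δ)` is at most `δ` times the exponential moment of `g` under the prior. Where the density
vanishes, `Real.log 0 = 0` puts no constraint on `g`, but the integrand is zero there. -/
theorem posterior_bad_le {W : Type*} [MeasurableSpace W] (P R : Measure W)
    [IsProbabilityMeasure P] [IsProbabilityMeasure R] (hac : R ≪ P) (g : W → ℝ)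
    (hg : Measurable g) (δ : ℝ) (hδ : 0 < δ) :
    R {w | log ((R.rnDeriv P w).toReal) + log (1 / δ) < g w}
      ≤ ∫⁻ w, ENNReal.ofReal (δ * exp (g w)) ∂P := by
  have hms : MeasurableSet {w | log ((R.rnDeriv P w).toReal) + log (1 / δ) < g w} :=
    measurableSet_lt (((Measure.measurable_rnDeriv R P).ennreal_toReal.log).add_const _) hg
  rw [← Measure.setLIntegral_rnDeriv' hac hms]
  refine le_trans ?_ (setLIntegral_le_lintegral
    {w | log ((R.rnDeriv P w).toReal) + log (1 / δ) < g w} _)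
  refine setLIntegral_mono_ae' hms ?_
  filter_upwards [Measure.rnDeriv_lt_top R P] with w hw hbad
  rw [← ENNReal.ofReal_toReal hw.ne]
  refine ENNReal.ofReal_le_ofReal ?_
  rcases (ENNReal.toReal_nonneg (a := R.rnDeriv P w)).eq_or_lt with h0 | h0
  · rw [← h0]
    positivity
  · have h1 : log ((R.rnDeriv P w).toReal) ≤ log δ + g w := by
      have h2 : log ((R.rnDeriv P w).toReal) + log (1 / δ) < g w := hbad
      rw [one_div, log_inv] at h2
      linarith
    calc (R.rnDeriv P w).toReal = exp (log ((R.rnDeriv P w).toReal)) := (exp_log h0).symm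
      _ ≤ exp (log δ + g w) := exp_le_exp.mpr h1
      _ = δ * exp (g w) := by rw [exp_add, exp_log hδ]

theorem lintegral_uniformPerm (n : ℕ) (f : Equiv.Perm (Fin n) → ENNReal) :
    ∫⁻ z, f z ∂(uniformPerm n) = ∑ z, f z * (n.factorial : ENNReal)⁻¹ := by
  let _ : Nonempty (Equiv.Perm (Fin n)) := ⟨1⟩
  rw [lintegral_fintype]
  refine Finset.sum_congr rfl fun z _ => ?_
  rw [uniformPerm, PMF.toMeasure_apply_singleton _ _ (MeasurableSet.singleton z),
    PMF.uniformOfFintype_apply, Fintype.card_perm, Fintype.card_fin]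

theorem statement14 {S 𝒲 : Type*} [MeasurableSpace S] [MeasurableSpace 𝒲]
    (m u : ℕ) (hm : 1 ≤ m) (hu : 1 ≤ u)
    (s : Fin (m + u) → S) (B : ℝ) (hB : 0 < B)
    (ℓ : 𝒲 → S → ℝ) (hℓmeas : Measurable fun p : 𝒲 × S => ℓ p.1 p.2)
    (hℓ : ∀ (w : 𝒲) (i : Fin (m + u)), 0 ≤ ℓ w (s i) ∧ ℓ w (s i) ≤ B)
    (P : Measure 𝒲) [IsProbabilityMeasure P]
    (Q : Equiv.Perm (Fin (m + u)) → Measure 𝒲)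
    (hQprob : ∀ z, IsProbabilityMeasure (Q z))
    (hQac : ∀ z, Q z ≪ P)
    (lam : ℝ) (hlam : 0 < lam) (δ : ℝ) (hδ0 : 0 < δ) (hδ1 : δ < 1) :
    1 - δ ≤
      (((uniformPerm (m + u)).bind
          (fun z => Measure.map (fun w => (z, w)) (Q z)))
        {p : Equiv.Perm (Fin (m + u)) × 𝒲 |
          Rtest m u s ℓ p.2 p.1
            ≤ Rtrain m u s ℓ p.2 p.1
              + lam * B ^ 2 * Cmu m u * ((m : ℝ) + u) / (8 * m * u)
              + (1 / lam) * (Real.log (((Q p.1).rnDeriv P p.2).toReal)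
                  + Real.log (1 / δ))}).toReal := by
  classical
  have : IsProbabilityMeasure (uniformPerm (m + u)) := by
    unfold uniformPerm
    infer_instance
  set K := lam * B ^ 2 * Cmu m u * ((m : ℝ) + u) / (8 * m * u) with hK
  set κ : Equiv.Perm (Fin (m + u)) → Measure (Equiv.Perm (Fin (m + u)) × 𝒲) :=
    fun z => Measure.map (fun w => (z, w)) (Q z) with hκ
  have hκm : Measurable κ := Measurable.of_discrete
  set G := {p : Equiv.Perm (Fin (m + u)) × 𝒲 |
          Rtest m u s ℓ p.2 p.1 ≤ Rtrain m u s ℓ p.2 p.1 + K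
              + (1 / lam) * (Real.log (((Q p.1).rnDeriv P p.2).toReal)
                  + Real.log (1 / δ))} with hG
  set g : Equiv.Perm (Fin (m + u)) → 𝒲 → ℝ := fun z w =>
    lam * (Rtest m u s ℓ w z - Rtrain m u s ℓ w z) - lam * K with hg
  have hℓi : ∀ i, Measurable fun w => ℓ w (s i) := fun i =>
    hℓmeas.comp (measurable_id.prodMk measurable_const)
  have hte : ∀ z : Equiv.Perm (Fin (m + u)), Measurable fun w => Rtest m u s ℓ w z := by
    intro z
    unfold Rtest
    refine (Finset.measurable_sum _ fun i _ => ?_).div_const _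
    split_ifs
    · exact hℓi _
    · exact measurable_const
  have htr : ∀ z : Equiv.Perm (Fin (m + u)), Measurable fun w => Rtrain m u s ℓ w z := by
    intro z
    unfold Rtrain
    refine (Finset.measurable_sum _ fun i _ => ?_).div_const _
    split_ifs
    · exact hℓi _
    · exact measurable_const
  have hgm : ∀ z, Measurable (g z) := fun z =>
    (((hte z).sub (htr z)).const_mul lam).sub_const _
  -- The sections over the finitely many permutations are measurable, hence so is the event.
  have hGm : MeasurableSet G := by
    refine measurableSet_le (measurable_from_prod_countable_right fun z => hte z)
      (measurable_from_prod_countable_right fun z => ?_)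
    exact ((htr z).add_const _).add
      ((((Measure.measurable_rnDeriv (Q z) P).ennreal_toReal.log).add_const _).const_mul _)
  have hsec : ∀ z, κ z Gᶜ
      = Q z {w | log (((Q z).rnDeriv P w).toReal) + log (1 / δ) < g z w} := by
    intro z
    rw [hκ, Measure.map_apply measurable_prodMk_left hGm.compl]
    congr 1
    ext w
    simp only [hG, hg, Set.mem_preimage, Set.mem_compl_iff, Set.mem_ofPred_eq, not_le]
    rw [← sub_pos, ← mul_pos_iff_of_pos_left hlam, ← sub_pos (b := _ + _)]
    have : lam * (Rtest m u s ℓ w z - (Rtrain m u s ℓ w z + K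
        + 1 / lam * (log ((Q z).rnDeriv P w).toReal + log (1 / δ))))
        = lam * (Rtest m u s ℓ w z - Rtrain m u s ℓ w z) - lam * K
          - (log ((Q z).rnDeriv P w).toReal + log (1 / δ)) := by
      field_simp
      ring
    rw [this]
  have hfac : (0 : ℝ) < ((m + u).factorial : ℝ) := by exact_mod_cast Nat.factorial_pos _
  have hmgf : ∀ w, ∑ z, δ * exp (g z w) ≤ δ * ((m + u).factorial : ℝ) := by
    intro w
    have h := gap_mgf_le m u hm hu s B ℓ w (hℓ w) lam
    rw [← hK] at h
    simp only [hg, exp_sub]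
    rw [← Finset.mul_sum, ← Finset.sum_div]
    refine mul_le_mul_of_nonneg_left ?_ hδ0.le
    rwa [div_le_iff₀ (exp_pos _)]
  have hbad : ((uniformPerm (m + u)).bind κ) Gᶜ ≤ ENNReal.ofReal δ := by
    rw [Measure.bind_apply hGm.compl hκm.aemeasurable, lintegral_uniformPerm, ← Finset.sum_mul]
    have hsum : ∑ z, κ z Gᶜ ≤ ENNReal.ofReal δ * ((m + u).factorial : ENNReal) := by
      calc ∑ z, κ z Gᶜ ≤ ∑ z, ∫⁻ w, ENNReal.ofReal (δ * exp (g z w)) ∂P := by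
            refine Finset.sum_le_sum fun z _ => ?_
            rw [hsec z]
            have := hQprob z
            exact posterior_bad_le P (Q z) (hQac z) (g z) (hgm z) δ hδ0
        _ = ∫⁻ w, ∑ z, ENNReal.ofReal (δ * exp (g z w)) ∂P := by
            rw [lintegral_finsetSum]
            intro z _
            exact ((hgm z).exp.const_mul δ).ennreal_ofReal
        _ ≤ ∫⁻ _, ENNReal.ofReal (δ * ((m + u).factorial : ℝ)) ∂P := by
            refine lintegral_mono fun w => ?_
            rw [← ENNReal.ofReal_sum_of_nonneg (fun z _ => by positivity)]
            exact ENNReal.ofReal_le_ofReal (hmgf w)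
        _ = _ := by
            rw [lintegral_const, measure_univ, mul_one, ENNReal.ofReal_mul hδ0.le,
              ENNReal.ofReal_natCast]
    rw [← div_eq_mul_inv]
    exact ENNReal.div_le_of_le_mul hsum
  have : IsProbabilityMeasure ((uniformPerm (m + u)).bind κ) := by
    refine isProbabilityMeasure_bind hκm.aemeasurable (Filter.Eventually.of_forall fun z => ?_)
    have := hQprob z
    exact Measure.isProbabilityMeasure_map measurable_prodMk_left.aemeasurable
  have hcompl := probReal_compl_eq_one_sub (μ := (uniformPerm (m + u)).bind κ) hGm
  have hle : ((uniformPerm (m + u)).bind κ).real Gᶜ ≤ δ :=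
    ENNReal.toReal_le_of_le_ofReal hδ0.le hbad
  rw [← measureReal_def]
  linarith

end
end
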